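/- arXiv:2406.13293 — 2 statements merged into one kernel-verified Lean document; each statement's English description precedes it below -/
import Mathlib

section
/- For every (K,c) ∈ D₁ there exists a unique real number μ_b = μ_b(K,c) such that the system (TV) with parameter μ has a solution satisfying condition (HE1) if and only if μ = μ_b; likewise, there exists a unique real number μ_f = μ_f(K,c) such that (TV) with parameter μ has a solution satisfying condition (HE2) if and only if μ = μ_f. -/
open Set Filter MeasureTheory

noncomputable section

namespace TrafficTW

/-- `f(u) = (K u - V(u) - c)/K`. -/
def fTV (V : ℝ → ℝ) (K c u : ℝ) : ℝ := (K * u - V u - c) / K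

/-- `f'(u) = (K - V'(u))/K`. -/
def fdTV (V' : ℝ → ℝ) (K u : ℝ) : ℝ := (K - V' u) / K

/-- `h(u,μ) = f'(u) + μ`. -/
def hTV (V' : ℝ → ℝ) (K μ u : ℝ) : ℝ := fdTV V' K u + μ

/-- `g₁(u) = 1/(τ κ(1/u))`. -/
def g1TV (κ : ℝ → ℝ) (τ u : ℝ) : ℝ := 1 / (τ * κ (1 / u))

/-- `g₂(u) = u/(2 τ κ(1/u))`. -/
def g2TV (κ : ℝ → ℝ) (τ u : ℝ) : ℝ := u / (2 * τ * κ (1 / u))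

/-- The traveling-wave system (TV): `u' = w`, `w' = g₁ f + g₂ h w`. -/
def IsTVSol (V V' κ : ℝ → ℝ) (τ K c μ : ℝ) (u w : ℝ → ℝ) : Prop :=
  (∀ z, HasDerivAt u (w z) z) ∧
  (∀ z, HasDerivAt w
    (g1TV κ τ (u z) * fTV V K c (u z) + g2TV κ τ (u z) * hTV V' K μ (u z) * w z) z)

/-- Assumption (A1), where `V'` and `V''` are the first and second derivatives of `V`. -/
def A1 (V V' V'' : ℝ → ℝ) (UM : ℝ) : Prop :=
  (∀ u ∈ Ici (0:ℝ), HasDerivWithinAt V (V' u) (Ici 0) u) ∧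
  ContinuousOn V' (Ici 0) ∧
  (∀ u ∈ Ioi (0:ℝ), HasDerivAt V' (V'' u) u) ∧
  ContinuousOn V'' (Ioi 0) ∧
  (∀ u, 0 < u → 0 < V' u) ∧ (∃ M, ∀ u, 0 < u → V' u ≤ M) ∧
  Tendsto V' atTop (nhds 0) ∧
  0 < UM ∧ (∀ u, 0 < u → V' u ≤ V' UM) ∧
  (∀ u, 0 < u → (V'' u = 0 ↔ u = UM))

/-- Assumption (A2). -/
def A2 (κ : ℝ → ℝ) : Prop :=
  ContDiffOn ℝ 1 κ (Ioi 0) ∧ ∀ ρ, 0 < ρ → 0 < κ ρ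

/-- `c₀ = -V(0)`. -/
def c0v (V : ℝ → ℝ) : ℝ := - V 0

/-- `c_M(K) = K u_M(K) - V(u_M(K))`, where `uMx` is the function `K ↦ u_M(K)`. -/
def cMf (V : ℝ → ℝ) (uMx : ℝ → ℝ) (K : ℝ) : ℝ := K * uMx K - V (uMx K)

/-- `c_m(K) = K u_m(K) - V(u_m(K))`, where `umx` is the function `K ↦ u_m(K)`. -/
def cmf (V : ℝ → ℝ) (umx : ℝ → ℝ) (K : ℝ) : ℝ := K * umx K - V (umx K)

/-- `c₁(K) = max (c₀, c_m(K))`. -/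
def c1f (V : ℝ → ℝ) (umx : ℝ → ℝ) (K : ℝ) : ℝ := max (c0v V) (cmf V umx K)

/-- `uMx K = u_M(K)` is the unique local maximum point of `u ↦ K u - V(u)`, characterized
by `u_M(K) ∈ (0, U_M)` and `V'(u_M(K)) = K`, for `K ∈ (K₀, K_M)`. -/
def UMaxHyp (V' : ℝ → ℝ) (UM : ℝ) (uMx : ℝ → ℝ) : Prop :=
  ∀ K, V' 0 < K → K < V' UM → uMx K ∈ Ioo 0 UM ∧ V' (uMx K) = K

/-- `umx K = u_m(K)` is the unique local minimum point of `u ↦ K u - V(u)`, characterized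
by `u_m(K) ∈ (U_M, ∞)` and `V'(u_m(K)) = K`, for `K ∈ (0, K_M)`. -/
def UMinHyp (V' : ℝ → ℝ) (UM : ℝ) (umx : ℝ → ℝ) : Prop :=
  ∀ K, 0 < K → K < V' UM → UM < umx K ∧ V' (umx K) = K

/-- Characterization of `K₁ ∈ (K₀, K_M)`: `c_m(K) < c₀` for `K < K₁` and `c_m(K) > c₀`
for `K > K₁`. -/
def K1Hyp (V V' : ℝ → ℝ) (UM : ℝ) (umx : ℝ → ℝ) (K₁ : ℝ) : Prop :=
  V' 0 < K₁ ∧ K₁ < V' UM ∧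
  (∀ K, 0 < K → K < K₁ → cmf V umx K < c0v V) ∧
  cmf V umx K₁ = c0v V ∧
  (∀ K, K₁ < K → K < V' UM → c0v V < cmf V umx K)

/-- The parameter region `D₁`. -/
def D1 (V V' : ℝ → ℝ) (UM : ℝ) (uMx umx : ℝ → ℝ) : Set (ℝ × ℝ) :=
  {p | V' 0 < p.1 ∧ p.1 < V' UM ∧ c1f V umx p.1 < p.2 ∧ p.2 < cMf V uMx p.1}

/-- The parameter region `D₂`. -/
def D2 (V V' : ℝ → ℝ) (umx : ℝ → ℝ) (K₁ : ℝ) : Set (ℝ × ℝ) :=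
  {p | (V' 0 < p.1 ∧ p.1 < K₁ ∧ p.2 = c0v V) ∨
       (0 < p.1 ∧ p.1 < K₁ ∧ cmf V umx p.1 < p.2 ∧ p.2 < c0v V)}

/-- For `(K,c) ∈ D₁`: `u₁ < u₀ < u₂` are the exactly three positive zeros of `f`. -/
def ZerosD1 (V : ℝ → ℝ) (K c u1 u0 u2 : ℝ) : Prop :=
  0 < u1 ∧ u1 < u0 ∧ u0 < u2 ∧
  fTV V K c u1 = 0 ∧ fTV V K c u0 = 0 ∧ fTV V K c u2 = 0 ∧
  ∀ u, 0 < u → fTV V K c u = 0 → u = u1 ∨ u = u0 ∨ u = u2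

/-- For `(K,c) ∈ D₂`: `u₀ < u₂` are the exactly two positive zeros of `f`. -/
def ZerosD2 (V : ℝ → ℝ) (K c u0 u2 : ℝ) : Prop :=
  0 < u0 ∧ u0 < u2 ∧ fTV V K c u0 = 0 ∧ fTV V K c u2 = 0 ∧
  ∀ u, 0 < u → fTV V K c u = 0 → u = u0 ∨ u = u2

/-- Condition (HE1). -/
def HE1 (u1 u2 : ℝ) (u w : ℝ → ℝ) : Prop :=
  Tendsto u atBot (nhds u1) ∧ Tendsto u atTop (nhds u2) ∧
  Tendsto w atBot (nhds 0) ∧ Tendsto w atTop (nhds 0) ∧ ∀ z, 0 < w z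

/-- Condition (HE2). -/
def HE2 (u1 u2 : ℝ) (u w : ℝ → ℝ) : Prop :=
  Tendsto u atBot (nhds u2) ∧ Tendsto u atTop (nhds u1) ∧
  Tendsto w atBot (nhds 0) ∧ Tendsto w atTop (nhds 0) ∧ ∀ z, w z < 0

/-- Condition (HO) with level `ub`. -/
def HO (ub : ℝ) (u w : ℝ → ℝ) : Prop :=
  Tendsto u atBot (nhds ub) ∧ Tendsto u atTop (nhds ub) ∧
  Tendsto w atBot (nhds 0) ∧ Tendsto w atTop (nhds 0) ∧
  ¬ (∀ z, u z = ub ∧ w z = 0)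

/-- (TV) with parameter `μ` has a positive solution satisfying (HE1). -/
def HasHE1 (V V' κ : ℝ → ℝ) (τ K c μ u1 u2 : ℝ) : Prop :=
  ∃ u w : ℝ → ℝ, IsTVSol V V' κ τ K c μ u w ∧ (∀ z, 0 < u z) ∧ HE1 u1 u2 u w

/-- (TV) with parameter `μ` has a positive solution satisfying (HE2). -/
def HasHE2 (V V' κ : ℝ → ℝ) (τ K c μ u1 u2 : ℝ) : Prop :=
  ∃ u w : ℝ → ℝ, IsTVSol V V' κ τ K c μ u w ∧ (∀ z, 0 < u z) ∧ HE2 u1 u2 u w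

/-- (TV) with parameter `μ` has a positive solution satisfying (HO) with level `ub`. -/
def HasHO (V V' κ : ℝ → ℝ) (τ K c μ ub : ℝ) : Prop :=
  ∃ u w : ℝ → ℝ, IsTVSol V V' κ τ K c μ u w ∧ (∀ z, 0 < u z) ∧ HO ub u w

/-- Condition (H): `∫₁^∞ dρ/(ρ³ κ(ρ)) = ∞`. -/
def CondH (κ : ℝ → ℝ) : Prop :=
  ¬ IntegrableOn (fun ρ => 1 / (ρ ^ 3 * κ ρ)) (Ioi 1)

/-- Condition (C). -/
def CondC (V' κ : ℝ → ℝ) (UM K₁ K : ℝ) : Prop :=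
  (K₁ < K ∧ K < V' UM) ∨ (CondH κ ∧ V' 0 < K ∧ K ≤ K₁)

/-- Periodic solution. -/
def IsPeriodicSol (u w : ℝ → ℝ) : Prop :=
  ∃ Z, 0 < Z ∧ ∀ z, u (z + Z) = u z ∧ w (z + Z) = w z

/-- Nonconstant pair of functions. -/
def Nonconst (u w : ℝ → ℝ) : Prop := ∃ z, u z ≠ u 0 ∨ w z ≠ w 0

/-- Discriminant of the Jacobian at an equilibrium `(u,0)`. -/
def discTV (V' κ : ℝ → ℝ) (τ K u μ : ℝ) : ℝ :=
  (g2TV κ τ u) ^ 2 * (hTV V' K μ u) ^ 2 + 4 * g1TV κ τ u * fdTV V' K u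

/-- The eigenvalue `λ₊(u)`. -/
def lamP (V' κ : ℝ → ℝ) (τ K u μ : ℝ) : ℝ :=
  (g2TV κ τ u * hTV V' K μ u + Real.sqrt (discTV V' κ τ K u μ)) / 2

/-- The eigenvalue `λ₋(u)`. -/
def lamM (V' κ : ℝ → ℝ) (τ K u μ : ℝ) : ℝ :=
  (g2TV κ τ u * hTV V' K μ u - Real.sqrt (discTV V' κ τ K u μ)) / 2

/-- `Z` is the minimal period of `(u,w)`. -/
def IsMinPeriod (u w : ℝ → ℝ) (Z : ℝ) : Prop :=
  0 < Z ∧ (∀ z, u (z + Z) = u z ∧ w (z + Z) = w z) ∧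
  ∀ Z', 0 < Z' → (∀ z, u (z + Z') = u z ∧ w (z + Z') = w z) → Z ≤ Z'

/-!
Dividing the second equation of (TV) by the first, an orbit in the half plane `w > 0` is the graph
`w = p(u)` of a solution of `dp/du = G/p + A`, with `G = g₁ f` and `A = g₂ f' + μ g₂`. So (HE1)
amounts to finding such a `p` on `[u₁, u₂]`, positive inside and vanishing at both endpoints.

Since `f'` is strictly quasiconvex, the mean value theorem on the intervals cut out by the zeros
gives `G > 0` on `(u₁, u₀)`, `G < 0` on `(u₀, u₂)` and `G'(u₀) < 0`. On `(u₁, u₀)` there is a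
solution with `p(u₁) = 0`; its value at `u₀` is continuous and nondecreasing in `μ` and unbounded
as `μ → ∞`, by comparison. Under `u ↦ -u` the same holds on `(u₀, u₂)` for the solution with
`p(u₂) = 0`, with `μ` replaced by `-μ`. The two values at `u₀` therefore agree for some `μ`. They
cannot both vanish there, since `G` has a simple zero at `u₀`, so the solutions join smoothly.
If `μ < ν` both admit a connection, comparison on the two sides forces equal values at `u₀`, and
then the derivatives at `u₀`, which differ by `(ν - μ) g₂(u₀)`, contradict the ordering on the
right. A connection with (HE2) for `μ` becomes one with `w > 0` under time reversal, which changes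
the sign of `A`.
-/

section

open scoped Topology

/-! ### Real functions and their derivatives -/

theorem nonneg_of_deriv_nonneg_of_neg {d d' : ℝ → ℝ} {l r : ℝ} (hd : ContinuousOn d (Icc l r))
    (hderiv : ∀ x ∈ Ioo l r, HasDerivAt d (d' x) x) (hl : 0 ≤ d l)
    (hneg : ∀ x ∈ Ioo l r, d x < 0 → 0 ≤ d' x) {x : ℝ} (hx : x ∈ Icc l r) : 0 ≤ d x := by
  by_contra! hdx
  have hclosed : IsClosed (Icc l x ∩ d ⁻¹' Ici 0) :=
    (hd.mono (Icc_subset_Icc_right hx.2)).preimage_isClosed_of_isClosed isClosed_Icc isClosed_Ici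
  obtain ⟨s, ⟨hs, hds⟩, hs_max⟩ := (isCompact_Icc.of_isClosed_subset hclosed
    inter_subset_left).exists_isGreatest ⟨l, ⟨le_rfl, hx.1⟩, hl⟩
  have hsx : s < x := hs.2.lt_of_ne fun h => hdx.not_ge (h ▸ hds)
  have hneg_after : ∀ t ∈ Ioo s x, d t < 0 := fun t ht => by
    by_contra! hdt
    exact ht.1.not_ge (hs_max ⟨⟨hs.1.trans ht.1.le, ht.2.le⟩, hdt⟩)
  have hmono : MonotoneOn d (Icc s x) := by
    refine monotoneOn_of_hasDerivWithinAt_nonneg (f' := d') (convex_Icc s x)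
      (hd.mono (Icc_subset_Icc hs.1 hx.2)) ?_ ?_ <;> rw [interior_Icc] <;> intro t ht
    · exact (hderiv t ⟨hs.1.trans_lt ht.1, ht.2.trans_le hx.2⟩).hasDerivWithinAt
    · exact hneg t ⟨hs.1.trans_lt ht.1, ht.2.trans_le hx.2⟩ (hneg_after t ht)
  exact hdx.not_ge (le_trans hds (hmono (left_mem_Icc.2 hsx.le) (right_mem_Icc.2 hsx.le) hsx.le))

theorem lipschitzOnWith_of_tendsto {ι X Y : Type*} [PseudoEMetricSpace X] [PseudoEMetricSpace Y]
    {F : Filter ι} [F.NeBot] {q : ι → X → Y} {p : X → Y} {s : Set X} {C : NNReal}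
    (hq : ∀ i, LipschitzOnWith C (q i) s)
    (hlim : ∀ x ∈ s, Tendsto (fun i => q i x) F (𝓝 (p x))) : LipschitzOnWith C p s :=
  fun x hx y hy => le_of_tendsto' ((hlim x hx).edist (hlim y hy)) fun i => hq i hx hy

theorem lipschitzOnWith_Icc_of_abs_deriv_le {f f' : ℝ → ℝ} {l r : ℝ} {C : NNReal}
    (hf : ContinuousOn f (Icc l r)) (hderiv : ∀ x ∈ Ioo l r, HasDerivAt f (f' x) x)
    (hC : ∀ x ∈ Ioo l r, |f' x| ≤ C) : LipschitzOnWith C f (Icc l r) := by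
  rcases eq_or_ne l r with rfl | hlr
  · rw [Icc_self]; exact LipschitzOnWith.of_dist_le_mul (by simp)
  have hIoo := (convex_Ioo l r).lipschitzOnWith_of_nnnorm_hasDerivWithin_le
    (fun x hx => (hderiv x hx).hasDerivWithinAt) (fun x hx => by
      rw [← NNReal.coe_le_coe]; exact hC x hx)
  rw [← closure_Ioo hlr] at hf ⊢
  exact hIoo.closure hf

theorem hasDerivAt_of_tendsto_of_bounded {q v : ℕ → ℝ → ℝ} {p φ : ℝ → ℝ} {l r C : ℝ}
    (hq : ∀ n, ∀ x ∈ Ioo l r, HasDerivAt (q n) (v n x) x)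
    (hv : ∀ n, ContinuousOn (v n) (Ioo l r)) (hC : ∀ n, ∀ x ∈ Ioo l r, |v n x| ≤ C)
    (hp : ∀ x ∈ Ioo l r, Tendsto (fun n => q n x) atTop (𝓝 (p x)))
    (hφ : ∀ x ∈ Ioo l r, Tendsto (fun n => v n x) atTop (𝓝 (φ x)))
    (hφc : ContinuousOn φ (Ioo l r)) {x : ℝ} (hx : x ∈ Ioo l r) : HasDerivAt p (φ x) x := by
  have hint : ∀ y ∈ Ioo l r, p y = p x + ∫ t in x..y, φ t := fun y hy => by
    have hsub : uIcc x y ⊆ Ioo l r := ordConnected_Ioo.uIcc_subset hx hy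
    have hsub' : uIoc x y ⊆ Ioo l r := uIoc_subset_uIcc.trans hsub
    have hn : ∀ n, ∫ t in x..y, v n t = q n y - q n x := fun n =>
      intervalIntegral.integral_eq_sub_of_hasDerivAt (fun t ht => hq n t (hsub ht))
        ((hv n).mono hsub).intervalIntegrable
    have hlim : Tendsto (fun n => ∫ t in x..y, v n t) atTop (𝓝 (∫ t in x..y, φ t)) :=
      intervalIntegral.tendsto_integral_filter_of_dominated_convergence (fun _ => C)
        (.of_forall fun n => ((hv n).mono hsub').aestronglyMeasurable measurableSet_uIoc)
        (.of_forall fun n => .of_forall fun t ht => hC n t (hsub' ht)) (by simp)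
        (.of_forall fun t ht => hφ t (hsub' ht))
    simp only [hn] at hlim
    linarith [tendsto_nhds_unique hlim ((hp y hy).sub (hp x hx))]
  have hnhds : Ioo l r ∈ 𝓝 x := Ioo_mem_nhds hx.1 hx.2
  refine ((intervalIntegral.integral_hasDerivAt_right .refl
    (hφc.stronglyMeasurableAtFilter isOpen_Ioo x hx)
    (hφc.continuousAt hnhds)).const_add (p x)).congr_of_eventuallyEq ?_
  filter_upwards [hnhds] with y hy using hint y hy

theorem exists_hasDerivWithinAt_Icc_of_bounded {v : ℝ → ℝ → ℝ} {l r : ℝ} {C L : NNReal}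
    (hlr : l ≤ r) (hlip : ∀ x ∈ Icc l r, LipschitzWith C (v x))
    (hcont : ∀ y, ContinuousOn (fun x => v x y) (Icc l r))
    (hL : ∀ x ∈ Icc l r, ∀ y, |v x y| ≤ L) (y₀ : ℝ) :
    ∃ y : ℝ → ℝ, y l = y₀ ∧ ∀ x ∈ Icc l r, HasDerivWithinAt y (v x (y x)) (Icc l r) x := by
  have hPL : IsPicardLindelof v (⟨l, left_mem_Icc.2 hlr⟩ : Icc l r) y₀
      (L * ⟨r - l, sub_nonneg.2 hlr⟩) 0 L C :=
    { lipschitzOnWith := fun x hx => (hlip x hx).lipschitzOnWith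
      continuousOn := fun y _ => hcont y
      norm_le := fun x hx y _ => hL x hx y
      mul_max_le := by
        simp only [sub_self, NNReal.coe_zero, sub_zero]
        rw [max_eq_left (sub_nonneg.2 hlr)]
        exact le_rfl }
  exact hPL.exists_eq_forall_mem_Icc_hasDerivWithinAt₀

theorem hasDerivAt_of_eventually_nhdsNE {f g : ℝ → ℝ} {x : ℝ}
    (hderiv : ∀ᶠ y in 𝓝[≠] x, HasDerivAt f (g y) y) (hf : ContinuousAt f x)
    (hg : ContinuousAt g x) : HasDerivAt f (g x) x := by
  rw [punctured_nhds_eq_nhdsWithin_sup_nhdsWithin, eventually_sup] at hderiv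
  obtain ⟨hlt, hgt⟩ := hderiv
  have hleft : HasDerivWithinAt f (g x) (Iic x) x :=
    hasDerivWithinAt_Iic_of_tendsto_deriv
      (s := {y | HasDerivAt f (g y) y}) (fun y hy => hy.differentiableAt.differentiableWithinAt)
      hf.continuousWithinAt hlt
      ((hg.tendsto.mono_left nhdsWithin_le_nhds).congr' (hlt.mono fun y hy => hy.deriv.symm))
  have hright : HasDerivWithinAt f (g x) (Ici x) x :=
    hasDerivWithinAt_Ici_of_tendsto_deriv
      (s := {y | HasDerivAt f (g y) y}) (fun y hy => hy.differentiableAt.differentiableWithinAt)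
      hf.continuousWithinAt hgt
      ((hg.tendsto.mono_left nhdsWithin_le_nhds).congr' (hgt.mono fun y hy => hy.deriv.symm))
  simpa using hleft.union hright

/-! ### Profiles -/

/-- The graph `w = p(u)`, `l ≤ u ≤ r`, is an orbit of the planar system `u' = w`,
`w' = G(u) + A(u) w` lying in the half plane `w > 0`: dividing the second equation by the first
gives `dp/du = G/p + A`. The endpoints are exempt, since the orbit may tend to equilibria there. -/
structure IsProfile (G A : ℝ → ℝ) (l r : ℝ) (p : ℝ → ℝ) : Prop where
  continuousOn : ContinuousOn p (Icc l r)
  pos : ∀ x ∈ Ioo l r, 0 < p x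
  hasDerivAt : ∀ x ∈ Ioo l r, HasDerivAt p (G x / p x + A x) x

namespace IsProfile

variable {F G A B p q : ℝ → ℝ} {l m r : ℝ}

theorem mono (hp : IsProfile G A l r p) {l' r' : ℝ} (hl : l ≤ l') (hr : r' ≤ r) :
    IsProfile G A l' r' p where
  continuousOn := hp.continuousOn.mono (Icc_subset_Icc hl hr)
  pos x hx := hp.pos x (Ioo_subset_Ioo hl hr hx)
  hasDerivAt x hx := hp.hasDerivAt x (Ioo_subset_Ioo hl hr hx)

theorem reflect (hp : IsProfile G A l r p) :
    IsProfile (fun s => -G (-s)) (fun s => -A (-s)) (-r) (-l) (fun s => p (-s)) where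
  continuousOn := hp.continuousOn.comp continuous_neg.continuousOn
    fun _ hx => ⟨le_neg_of_le_neg hx.2, neg_le_of_neg_le hx.1⟩
  pos x hx := hp.pos (-x) ⟨lt_neg_of_lt_neg hx.2, neg_lt_of_neg_lt hx.1⟩
  hasDerivAt x hx := by
    have h := hp.hasDerivAt (-x) ⟨lt_neg_of_lt_neg hx.2, neg_lt_of_neg_lt hx.1⟩
    exact (h.comp x (hasDerivAt_neg x)).congr_deriv (by ring)

theorem le_add {N : ℝ} (hp : IsProfile F A l r p) (hq : IsProfile G B l r q)
    (hl : p l ≤ q l) (hFG : ∀ x ∈ Ioo l r, F x ≤ G x) (hG : ∀ x ∈ Ioo l r, 0 ≤ G x) (hN : 0 ≤ N)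
    (hAB : ∀ x ∈ Ioo l r, A x ≤ B x + N) {x : ℝ} (hx : x ∈ Icc l r) :
    p x ≤ q x + N * (x - l) := by
  refine sub_nonneg.1 <| nonneg_of_deriv_nonneg_of_neg
    (d := fun x => q x + N * (x - l) - p x)
    ((hq.continuousOn.add (by fun_prop)).sub hp.continuousOn)
    (fun x hx => ((hq.hasDerivAt x hx).add (((hasDerivAt_id x).sub_const l).const_mul N)).sub
      (hp.hasDerivAt x hx)) (by simpa using hl) (fun x hx hneg => ?_) hx
  have hqp : q x ≤ p x := by linarith [mul_nonneg hN (sub_nonneg.2 hx.1.le)]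
  have hquot : F x / p x ≤ G x / q x :=
    (div_le_div_of_nonneg_right (hFG x hx) (hp.pos x hx).le).trans
      (div_le_div_of_nonneg_left (hG x hx) (hq.pos x hx) hqp)
  linarith [hAB x hx]

theorem le_of_le (hp : IsProfile F A l r p) (hq : IsProfile G B l r q) (hl : p l ≤ q l)
    (hFG : ∀ x ∈ Ioo l r, F x ≤ G x) (hG : ∀ x ∈ Ioo l r, 0 ≤ G x)
    (hAB : ∀ x ∈ Ioo l r, A x ≤ B x) {x : ℝ} (hx : x ∈ Icc l r) : p x ≤ q x := by
  simpa using hp.le_add hq hl hFG hG le_rfl (by simpa using hAB) hx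

theorem linear_le {N : ℝ} (hp : IsProfile G A l r p) (hl : 0 ≤ p l)
    (hG : ∀ x ∈ Ioo l r, 0 ≤ G x) (hA : ∀ x ∈ Ioo l r, N ≤ A x) {x : ℝ} (hx : x ∈ Icc l r) :
    N * (x - l) ≤ p x := by
  refine sub_nonneg.1 <| nonneg_of_deriv_nonneg_of_neg (d := fun x => p x - N * (x - l))
    (hp.continuousOn.sub (by fun_prop))
    (fun x hx => (hp.hasDerivAt x hx).sub (((hasDerivAt_id x).sub_const l).const_mul N))
    (by simpa using hl) (fun x hx _ => ?_) hx
  have hquot : 0 ≤ G x / p x := div_nonneg (hG x hx) (hp.pos x hx).le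
  linarith [hA x hx]

theorem le_linear {M N : ℝ} (hp : IsProfile G A l r p) (hl : p l ≤ 0) (hM : 0 ≤ M) (hN : 0 ≤ N)
    (hG : ∀ x ∈ Ioo l r, G x ≤ M * (x - l)) (hA : ∀ x ∈ Ioo l r, A x ≤ N) {x : ℝ}
    (hx : x ∈ Icc l r) : p x ≤ (M + N + 1) * (x - l) := by
  refine sub_nonneg.1 <| nonneg_of_deriv_nonneg_of_neg
    (d := fun x => (M + N + 1) * (x - l) - p x) (ContinuousOn.sub (by fun_prop) hp.continuousOn)
    (fun x hx => (((hasDerivAt_id x).sub_const l).const_mul (M + N + 1)).sub (hp.hasDerivAt x hx))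
    (by simpa using hl) (fun x hx hneg => ?_) hx
  have hquot : G x / p x ≤ M := by
    rw [div_le_iff₀ (hp.pos x hx)]
    nlinarith [hG x hx, hx.1, mul_nonneg hM (sub_nonneg.2 hx.1.le),
      mul_nonneg (add_nonneg hM hN) (sub_nonneg.2 hx.1.le)]
  linarith [hA x hx]

theorem congr (hp : IsProfile G A l r p) (hpq : EqOn q p (Icc l r)) : IsProfile G A l r q where
  continuousOn := hp.continuousOn.congr hpq
  pos x hx := (hpq (Ioo_subset_Icc_self hx)).symm ▸ hp.pos x hx
  hasDerivAt x hx := by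
    rw [hpq (Ioo_subset_Icc_self hx)]
    exact (hp.hasDerivAt x hx).congr_of_eventuallyEq
      (hpq.eventuallyEq_of_mem (Icc_mem_nhds hx.1 hx.2))

theorem union (hl : IsProfile G A l m p) (hr : IsProfile G A m r p) (hlm : l < m) (hmr : m < r)
    (hm : 0 < p m) (hG : ContinuousAt G m) (hA : ContinuousAt A m) : IsProfile G A l r p where
  continuousOn := by
    rw [← Icc_union_Icc_eq_Icc hlm.le hmr.le]
    exact hl.continuousOn.union_of_isClosed hr.continuousOn isClosed_Icc isClosed_Icc
  pos x hx := by
    rcases lt_trichotomy x m with h | rfl | h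
    exacts [hl.pos x ⟨hx.1, h⟩, hm, hr.pos x ⟨h, hx.2⟩]
  hasDerivAt x hx := by
    rcases lt_trichotomy x m with h | rfl | h
    · exact hl.hasDerivAt x ⟨hx.1, h⟩
    · have hp : ContinuousAt p x := continuousAt_iff_continuous_left'_right'.2
        ⟨((hl.continuousOn x (right_mem_Icc.2 hlm.le)).mono_of_mem_nhdsWithin
          (Icc_mem_nhdsLT hlm)), ((hr.continuousOn x (left_mem_Icc.2 hmr.le)).mono_of_mem_nhdsWithin
          (Icc_mem_nhdsGT hmr))⟩
      refine hasDerivAt_of_eventually_nhdsNE (g := fun t => G t / p t + A t) ?_ hp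
        ((hG.div hp hm.ne').add hA)
      filter_upwards [self_mem_nhdsWithin,
        mem_nhdsWithin_of_mem_nhds (Ioo_mem_nhds hlm hmr)] with t htx ht
      rcases lt_or_gt_of_ne htx with h | h
      exacts [hl.hasDerivAt t ⟨ht.1, h⟩, hr.hasDerivAt t ⟨h, ht.2⟩]
    · exact hr.hasDerivAt x ⟨h, hx.2⟩

theorem glue (hp : IsProfile G A l m p) (hq : IsProfile G A m r q) (hlm : l < m) (hmr : m < r)
    (hpq : p m = q m) (hm : 0 < p m) (hG : ContinuousAt G m) (hA : ContinuousAt A m) :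
    IsProfile G A l r (fun x => if x ≤ m then p x else q x) := by
  refine (hp.congr fun x hx => if_pos hx.2).union (hq.congr fun x hx => ?_) hlm hmr ?_ hG hA
  · rcases hx.1.eq_or_lt with rfl | h
    exacts [(if_pos le_rfl).trans hpq, if_neg h.not_ge]
  · simpa using hm

end IsProfile

/-! ### Existence of profiles -/

theorem lipschitzWith_div_max {c η : ℝ} (hc : 0 ≤ c) (hη : 0 < η) :
    LipschitzWith (c / η ^ 2).toNNReal (fun y => c / max y η) := by
  refine LipschitzWith.of_dist_le_mul fun x y => ?_
  have hx : η ≤ max x η := le_max_right _ _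
  have hy : η ≤ max y η := le_max_right _ _
  have : 0 < max x η := hη.trans_le hx
  have : 0 < max y η := hη.trans_le hy
  rw [Real.coe_toNNReal _ (by positivity), Real.dist_eq, Real.dist_eq]
  calc |c / max x η - c / max y η| = |c / (max x η * max y η)| * |max y η - max x η| := by
        rw [← abs_mul]
        congr 1
        field_simp
    _ ≤ c / η ^ 2 * |x - y| := by
        rw [abs_of_nonneg (by positivity), sq, abs_sub_comm x y]
        exact mul_le_mul (by gcongr) (abs_max_sub_max_le_abs _ _ _) (abs_nonneg _) (by positivity)

theorem exists_hasDerivAt_div_max_add {F A : ℝ → ℝ} {l r η : ℝ} (hlr : l ≤ r) (hη : 0 < η)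
    (hF : ContinuousOn F (Icc l r)) (hF₀ : ∀ x ∈ Icc l r, 0 ≤ F x)
    (hA : ContinuousOn A (Icc l r)) (y₀ : ℝ) :
    ∃ y : ℝ → ℝ, y l = y₀ ∧ ContinuousOn y (Icc l r) ∧
      ∀ x ∈ Ioo l r, HasDerivAt y (F x / max (y x) η + A x) x := by
  obtain ⟨M, hM⟩ := isCompact_Icc.exists_bound_of_continuousOn hF
  obtain ⟨N, hN⟩ := isCompact_Icc.exists_bound_of_continuousOn hA
  have hbound : ∀ x ∈ Icc l r, ∀ y, |F x / max y η + A x| ≤ (M / η + N).toNNReal := by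
    intro x hx y
    have hmax : 0 < max y η := lt_max_of_lt_right hη
    refine ((abs_add_le _ _).trans (add_le_add ?_ (hN x hx))).trans (Real.le_coe_toNNReal _)
    rw [abs_of_nonneg (div_nonneg (hF₀ x hx) hmax.le)]
    exact div_le_div₀ ((norm_nonneg _).trans (hM x hx)) ((le_abs_self _).trans (hM x hx)) hη
      (le_max_right _ _)
  have hlip : ∀ x ∈ Icc l r,
      LipschitzWith (M / η ^ 2).toNNReal fun y => F x / max y η + A x := by
    intro x hx
    refine LipschitzWith.of_dist_le_mul fun y z => ?_
    rw [dist_add_right]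
    refine ((lipschitzWith_div_max (hF₀ x hx) hη).weaken ?_).dist_le_mul y z
    exact Real.toNNReal_mono (by gcongr; exact (le_abs_self _).trans (hM x hx))
  obtain ⟨y, hy₀, hy⟩ := exists_hasDerivWithinAt_Icc_of_bounded hlr hlip
    (fun y => (hF.div_const _).add hA) hbound y₀
  exact ⟨y, hy₀, fun x hx => (hy x hx).continuousWithinAt,
    fun x hx => (hy x (Ioo_subset_Icc_self hx)).hasDerivAt (Icc_mem_nhds hx.1 hx.2)⟩

theorem exists_isProfile_of_pos {F F' A : ℝ → ℝ} {l r δ M N : ℝ} (hlr : l ≤ r) (hδ : 0 < δ)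
    (hδMN : δ * M + N ≤ 1 / δ) (hF : ContinuousOn F (Icc l r)) (hF₀ : ∀ x ∈ Icc l r, 0 < F x)
    (hF' : ∀ x ∈ Ioo l r, HasDerivAt F (F' x) x) (hM : ∀ x ∈ Ioo l r, F' x ≤ M)
    (hA : ContinuousOn A (Icc l r)) (hN : ∀ x ∈ Ioo l r, -N ≤ A x) :
    ∃ p, IsProfile F A l r p ∧ p l = δ * F l ∧ ∀ x ∈ Icc l r, δ * F x ≤ p x := by
  obtain ⟨x₀, hx₀, hmin⟩ := isCompact_Icc.exists_isMinOn (nonempty_Icc.2 hlr) hF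
  have hη : 0 < δ * F x₀ := mul_pos hδ (hF₀ x₀ hx₀)
  have hηle : ∀ x ∈ Icc l r, δ * F x₀ ≤ δ * F x := fun x hx =>
    mul_le_mul_of_nonneg_left (hmin hx) hδ.le
  obtain ⟨p, hpl, hpc, hp⟩ := exists_hasDerivAt_div_max_add hlr hη hF
    (fun x hx => (hF₀ x hx).le) hA (δ * F l)
  have hlower : ∀ x ∈ Icc l r, δ * F x ≤ p x := fun x hx => by
    refine sub_nonneg.1 <| nonneg_of_deriv_nonneg_of_neg (d := fun x => p x - δ * F x)
      (hpc.sub (hF.const_mul δ)) (fun x hx => (hp x hx).sub ((hF' x hx).const_mul δ))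
      (by simp [hpl]) (fun x hx hneg => ?_) hx
    have hx' := Ioo_subset_Icc_self hx
    have hmax : max (p x) (δ * F x₀) ≤ δ * F x := max_le (by linarith) (hηle x hx')
    have hquot : 1 / δ ≤ F x / max (p x) (δ * F x₀) := by
      rw [div_le_div_iff₀ hδ (lt_max_of_lt_right hη)]
      linarith
    linarith [hN x hx, mul_le_mul_of_nonneg_left (hM x hx) hδ.le]
  refine ⟨p, ⟨hpc, fun x hx => ?_, fun x hx => ?_⟩, hpl, hlower⟩ <;>
    have hx' := Ioo_subset_Icc_self hx
  · exact (mul_pos hδ (hF₀ x hx')).trans_le (hlower x hx')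
  · simpa only [max_eq_left ((hηle x hx').trans (hlower x hx'))] using hp x hx

theorem IsProfile.of_tendsto {F q : ℕ → ℝ → ℝ} {G A p : ℝ → ℝ} {l r C : ℝ}
    (hq : ∀ n, IsProfile (F n) A l r (q n)) (hF : ∀ n, ContinuousOn (F n) (Ioo l r))
    (hC : ∀ n, ∀ x ∈ Ioo l r, |F n x / q n x| ≤ C) (hG : ContinuousOn G (Ioo l r))
    (hA : ContinuousOn A (Icc l r))
    (hFlim : ∀ x ∈ Ioo l r, Tendsto (fun n => F n x) atTop (𝓝 (G x)))
    (hqlim : ∀ x ∈ Icc l r, Tendsto (fun n => q n x) atTop (𝓝 (p x)))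
    (hp : ∀ x ∈ Ioo l r, 0 < p x) : IsProfile G A l r p := by
  obtain ⟨N, hN⟩ := isCompact_Icc.exists_bound_of_continuousOn hA
  have hA' : ContinuousOn A (Ioo l r) := hA.mono Ioo_subset_Icc_self
  have hbound : ∀ n, ∀ x ∈ Ioo l r, |F n x / q n x + A x| ≤ C + N := fun n x hx =>
    (abs_add_le _ _).trans (add_le_add (hC n x hx) (hN x (Ioo_subset_Icc_self hx)))
  have hpc : ContinuousOn p (Icc l r) := by
    refine LipschitzOnWith.continuousOn (K := (C + N).toNNReal)
      (lipschitzOnWith_of_tendsto (fun n => ?_) hqlim)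
    exact lipschitzOnWith_Icc_of_abs_deriv_le (hq n).continuousOn (hq n).hasDerivAt
      fun x hx => (hbound n x hx).trans (Real.le_coe_toNNReal _)
  refine ⟨hpc, hp, fun x hx => hasDerivAt_of_tendsto_of_bounded
    (φ := fun t => G t / p t + A t) (fun n => (hq n).hasDerivAt)
    (fun n => ?_) hbound (fun t ht => hqlim t (Ioo_subset_Icc_self ht)) (fun t ht => ?_) ?_ hx⟩
  · exact ((hF n).div ((hq n).continuousOn.mono Ioo_subset_Icc_self)
      fun t ht => ((hq n).pos t ht).ne').add hA'
  · exact ((hFlim t ht).div (hqlim t (Ioo_subset_Icc_self ht)) (hp t ht).ne').add_const _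
  · exact (hG.div (hpc.mono Ioo_subset_Icc_self) fun t ht => (hp t ht).ne').add hA'

/-- A bump of the reaction term `G` between two consecutive zeros, the right one simple;
`G'` is the derivative of `G`. -/
structure IsHump (G G' : ℝ → ℝ) (l r : ℝ) : Prop where
  lt : l < r
  hasDerivAt : ∀ x ∈ Icc l r, HasDerivAt G (G' x) x
  continuousOn_deriv : ContinuousOn G' (Icc l r)
  map_left : G l = 0
  map_right : G r = 0
  pos : ∀ x ∈ Ioo l r, 0 < G x
  deriv_right_neg : G' r < 0

namespace IsHump

variable {G G' A : ℝ → ℝ} {l r : ℝ}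

theorem continuousOn (hG : IsHump G G' l r) : ContinuousOn G (Icc l r) :=
  fun x hx => (hG.hasDerivAt x hx).continuousAt.continuousWithinAt

theorem nonneg (hG : IsHump G G' l r) {x : ℝ} (hx : x ∈ Icc l r) : 0 ≤ G x := by
  rcases eq_endpoints_or_mem_Ioo_of_mem_Icc hx with rfl | rfl | hx
  exacts [hG.map_left.ge, hG.map_right.ge, (hG.pos x hx).le]

theorem exists_isProfile_add_const (hG : IsHump G G' l r) (hA : ContinuousOn A (Icc l r)) :
    ∃ δ > 0, ∀ ε > 0, ∃ p, IsProfile (fun x => G x + ε) A l r p ∧ p l = δ * ε ∧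
      ∀ x ∈ Icc l r, δ * (G x + ε) ≤ p x := by
  obtain ⟨M, hM⟩ := isCompact_Icc.exists_bound_of_continuousOn hG.continuousOn_deriv
  obtain ⟨N, hN⟩ := isCompact_Icc.exists_bound_of_continuousOn hA
  have hl : l ∈ Icc l r := left_mem_Icc.2 hG.lt.le
  have hM₀ : 0 ≤ M := (norm_nonneg _).trans (hM l hl)
  have hN₀ : 0 ≤ N := (norm_nonneg _).trans (hN l hl)
  refine ⟨1 / (M + N + 1), by positivity, fun ε hε => ?_⟩
  have hδ : 1 / (M + N + 1) * M + N ≤ 1 / (1 / (M + N + 1)) := by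
    have : 1 / (M + N + 1) * M ≤ 1 * M :=
      mul_le_mul_of_nonneg_right ((div_le_one (by positivity)).2 (by linarith)) hM₀
    rw [one_div_one_div]
    linarith
  simpa [hG.map_left] using exists_isProfile_of_pos (F := fun x => G x + ε) hG.lt.le
    (by positivity) hδ (hG.continuousOn.add continuousOn_const)
    (fun x hx => add_pos_of_nonneg_of_pos (hG.nonneg hx) hε)
    (fun x hx => (hG.hasDerivAt x (Ioo_subset_Icc_self hx)).add_const ε)
    (fun x hx => (le_abs_self _).trans (hM x (Ioo_subset_Icc_self hx))) hA
    (fun x hx => (abs_le.1 (hN x (Ioo_subset_Icc_self hx))).1)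

-- The profiles for the forcings `G + 1 / (n + 1)` decrease in `n`; the lower bound `δ * G`
-- keeps the limit away from zero in the interior.
theorem exists_isProfile (hG : IsHump G G' l r) (hA : ContinuousOn A (Icc l r)) :
    ∃ p, IsProfile G A l r p ∧ p l = 0 := by
  obtain ⟨δ, hδ, hreg⟩ := hG.exists_isProfile_add_const hA
  have hε : ∀ n : ℕ, (0 : ℝ) < 1 / (n + 1) := fun n => Nat.one_div_pos_of_nat
  choose q hq hql hlower using fun n => hreg _ (hε n)
  have hFpos : ∀ n : ℕ, ∀ x ∈ Icc l r, 0 < G x + 1 / ((n : ℝ) + 1) := fun n x hx =>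
    add_pos_of_nonneg_of_pos (hG.nonneg hx) (hε n)
  have hqpos : ∀ n, ∀ x ∈ Icc l r, 0 < q n x := fun n x hx =>
    (mul_pos hδ (hFpos n x hx)).trans_le (hlower n x hx)
  have hanti : ∀ x ∈ Icc l r, Antitone fun n => q n x := fun x hx n k hnk => by
    have hεnk : (1 : ℝ) / (k + 1) ≤ 1 / (n + 1) := Nat.one_div_le_one_div hnk
    refine (hq k).le_of_le (hq n) ?_ (fun t _ => by linarith)
      (fun t ht => (hFpos n t (Ioo_subset_Icc_self ht)).le) (fun _ _ => le_rfl) hx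
    rw [hql, hql]
    gcongr
  have hlim : ∀ x ∈ Icc l r, ∃ y, Tendsto (fun n => q n x) atTop (𝓝 y) := fun x hx =>
    ⟨_, tendsto_atTop_ciInf (hanti x hx) ⟨0, by rintro _ ⟨n, rfl⟩; exact (hqpos n x hx).le⟩⟩
  choose! p hp using hlim
  have hFlim : ∀ x, Tendsto (fun n : ℕ => G x + 1 / ((n : ℝ) + 1)) atTop (𝓝 (G x)) := fun x => by
    simpa using tendsto_one_div_add_atTop_nhds_zero_nat.const_add (G x)
  refine ⟨p, IsProfile.of_tendsto (C := 1 / δ) hq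
    (fun n => (hG.continuousOn.mono Ioo_subset_Icc_self).add continuousOn_const) ?_
    (hG.continuousOn.mono Ioo_subset_Icc_self) hA (fun x _ => hFlim x) hp ?_, ?_⟩
  · intro n x hx
    have hx' := Ioo_subset_Icc_self hx
    rw [abs_of_pos (div_pos (hFpos n x hx') (hqpos n x hx')), div_le_div_iff₀ (hqpos n x hx') hδ]
    linarith [hlower n x hx']
  · intro x hx
    exact (mul_pos hδ (hG.pos x hx)).trans_le <| le_of_tendsto_of_tendsto'
      ((hFlim x).const_mul δ) (hp x (Ioo_subset_Icc_self hx))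
      fun n => hlower n x (Ioo_subset_Icc_self hx)
  · refine tendsto_nhds_unique (hp l (left_mem_Icc.2 hG.lt.le)) ?_
    simpa [hql] using (tendsto_one_div_add_atTop_nhds_zero_nat (𝕜 := ℝ)).const_mul δ

end IsHump

/-! ### Bistable reaction terms -/

-- Since `p' ≥ -ε`, a profile with `p r = 0` lies below `ε * (r - x)`; but then
-- `G / p ≥ k / ε ≥ ε`, so that `p' ≥ 0` and `p` cannot decrease to `0`.
theorem IsProfile.right_pos {G A p : ℝ → ℝ} {l r k ε : ℝ} (hp : IsProfile G A l r p) (hlr : l < r)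
    (hε : 0 < ε) (hk : ε ^ 2 ≤ k) (hG : ∀ x ∈ Ioo l r, k * (r - x) ≤ G x)
    (hA : ∀ x ∈ Ioo l r, -ε ≤ A x) : 0 < p r := by
  by_contra! hpr
  have hquot : ∀ x ∈ Ioo l r, 0 ≤ G x / p x := fun x hx =>
    div_nonneg ((mul_nonneg ((sq_nonneg ε).trans hk) (sub_nonneg.2 hx.2.le)).trans (hG x hx))
      (hp.pos x hx).le
  have hmono_add : MonotoneOn (fun x => p x + ε * x) (Icc l r) := by
    refine monotoneOn_of_hasDerivWithinAt_nonneg (f' := fun x => G x / p x + A x + ε * 1)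
      (convex_Icc l r) (hp.continuousOn.add (by fun_prop)) ?_ ?_ <;>
      rw [interior_Icc] <;> intro x hx
    · exact ((hp.hasDerivAt x hx).add ((hasDerivAt_id x).const_mul ε)).hasDerivWithinAt
    · linarith [hquot x hx, hA x hx]
  have hupper : ∀ x ∈ Ioo l r, p x ≤ ε * (r - x) := fun x hx => by
    have := hmono_add (Ioo_subset_Icc_self hx) (right_mem_Icc.2 hlr.le) hx.2.le
    simp only at this
    linarith
  have hmono : MonotoneOn p (Icc l r) := by
    refine monotoneOn_of_hasDerivWithinAt_nonneg (convex_Icc l r) hp.continuousOn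
      (f' := fun x => G x / p x + A x) ?_ ?_ <;> rw [interior_Icc] <;> intro x hx
    · exact (hp.hasDerivAt x hx).hasDerivWithinAt
    · have : ε ≤ G x / p x := by
        rw [le_div_iff₀ (hp.pos x hx)]
        nlinarith [hG x hx, mul_le_mul_of_nonneg_left (hupper x hx) hε.le,
          mul_le_mul_of_nonneg_right hk (sub_nonneg.2 hx.2.le)]
      linarith [hA x hx]
  obtain ⟨x, hx⟩ := exists_between hlr
  exact (hp.pos x hx).not_ge <| (hmono (Ioo_subset_Icc_self hx) (right_mem_Icc.2 hlr.le)
    hx.2.le).trans hpr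

namespace IsHump

variable {G G' A a b p : ℝ → ℝ} {l r : ℝ}

theorem eventually_linear_le (hG : IsHump G G' l r) {k : ℝ} (hk : k < -G' r) :
    ∀ᶠ x in 𝓝[<] r, k * (r - x) ≤ G x := by
  have hslope := (hG.hasDerivAt r (right_mem_Icc.2 hG.lt.le)).tendsto_slope.mono_left
    (nhdsLT_le_nhdsNE r)
  filter_upwards [hslope.eventually_lt_const (lt_neg_of_lt_neg hk), self_mem_nhdsWithin]
    with x hx hxr
  rw [slope_def_field, hG.map_right, sub_zero, div_lt_iff_of_neg (sub_neg.2 hxr)] at hx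
  linarith

theorem right_pos (hG : IsHump G G' l r) (hp : IsProfile G A l r p)
    (hA : ContinuousOn A (Icc l r)) (hAr : 0 ≤ A r) : 0 < p r := by
  have hk : 0 < -G' r / 2 := half_pos (neg_pos.2 hG.deriv_right_neg)
  have hε := Real.sqrt_pos.2 hk
  have hA_lt : ∀ᶠ x in 𝓝[<] r, -√(-G' r / 2) < A x :=
    (((hA r (right_mem_Icc.2 hG.lt.le)).mono_of_mem_nhdsWithin
      (Icc_mem_nhdsLT hG.lt)).tendsto).eventually_const_lt (by linarith)
  obtain ⟨l', hl', hsub⟩ := (mem_nhdsLT_iff_exists_Ioo_subset' hG.lt).1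
    ((hG.eventually_linear_le (half_lt_self (neg_pos.2 hG.deriv_right_neg))).and hA_lt)
  refine (hp.mono (le_max_left l l') le_rfl).right_pos (max_lt hG.lt hl') hε
    (Real.sq_sqrt hk.le).le (fun x hx => ?_) fun x hx => ?_
  exacts [(hsub ⟨(le_max_right _ _).trans_lt hx.1, hx.2⟩).1,
    (hsub ⟨(le_max_right _ _).trans_lt hx.1, hx.2⟩).2.le]

theorem exists_endpoint_map (hG : IsHump G G' l r) (ha : ContinuousOn a (Icc l r))
    (hb : ContinuousOn b (Icc l r)) (hb₀ : ∀ x ∈ Icc l r, 0 < b x) :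
    ∃ e : ℝ → ℝ, Continuous e ∧ Monotone e ∧ Tendsto e atTop atTop ∧
      ∀ μ, ∃ p, IsProfile G (fun x => a x + μ * b x) l r p ∧ p l = 0 ∧ p r = e μ := by
  have hl : l ∈ Icc l r := left_mem_Icc.2 hG.lt.le
  have hr : r ∈ Icc l r := right_mem_Icc.2 hG.lt.le
  have hG₀ : ∀ x ∈ Ioo l r, 0 ≤ G x := fun x hx => (hG.pos x hx).le
  obtain ⟨B, hB⟩ := isCompact_Icc.exists_bound_of_continuousOn hb
  obtain ⟨N, hN⟩ := isCompact_Icc.exists_bound_of_continuousOn ha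
  obtain ⟨x₀, hx₀, hmin⟩ := isCompact_Icc.exists_isMinOn ⟨l, hl⟩ hb
  have hex : ∀ μ, ∃ p, IsProfile G (fun x => a x + μ * b x) l r p ∧ p l = 0 := fun μ =>
    hG.exists_isProfile (ha.add (hb.const_mul μ))
  choose P hP hPl using hex
  have hlip : ∀ μ ν, P μ r ≤ P ν r + B * (r - l) * dist μ ν := fun μ ν => by
    rw [Real.dist_eq]
    refine ((hP μ).le_add (N := |μ - ν| * B) (hP ν) (by rw [hPl, hPl]) (fun _ _ => le_rfl) hG₀
      (by positivity [(norm_nonneg _).trans (hB l hl)]) (fun x hx => ?_) hr).trans (by linarith)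
    have := mul_le_mul (le_abs_self (μ - ν))
      ((le_abs_self _).trans (hB x (Ioo_subset_Icc_self hx)))
      (hb₀ x (Ioo_subset_Icc_self hx)).le (abs_nonneg _)
    linarith
  refine ⟨fun μ => P μ r, ?_, fun μ ν hμν => ?_, ?_, fun μ => ⟨P μ, hP μ, hPl μ, rfl⟩⟩
  · exact (LipschitzWith.of_le_add_mul' _ hlip).continuous
  · exact (hP μ).le_of_le (hP ν) (by rw [hPl, hPl]) (fun _ _ => le_rfl) hG₀
      (fun x hx => add_le_add le_rfl
        (mul_le_mul_of_nonneg_right hμν (hb₀ x (Ioo_subset_Icc_self hx)).le)) hr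
  · have hlow : ∀ᶠ μ : ℝ in atTop, (-N + μ * b x₀) * (r - l) ≤ P μ r := by
      filter_upwards [eventually_ge_atTop 0] with μ hμ
      refine (hP μ).linear_le (hPl μ).ge hG₀ (fun x hx => ?_) hr
      have hx' := Ioo_subset_Icc_self hx
      exact add_le_add (abs_le.1 (hN x hx')).1 (mul_le_mul_of_nonneg_left (hmin hx') hμ)
    refine tendsto_atTop_mono' _ hlow (Tendsto.atTop_mul_const (sub_pos.2 hG.lt) ?_)
    exact tendsto_atTop_add_const_left _ _ (tendsto_id.atTop_mul_const (hb₀ x₀ hx₀))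

end IsHump

/-- A reaction term of bistable type: `l` and `r` are stable zeros of `G`, separated by the
single simple zero `m`; `G'` is the derivative of `G`. The sign is the one of the
travelling-wave system, in which `u'' = G(u) + ⋯`. -/
structure IsBistable (G G' : ℝ → ℝ) (l m r : ℝ) : Prop where
  lt_mid : l < m
  mid_lt : m < r
  hasDerivAt : ∀ x ∈ Icc l r, HasDerivAt G (G' x) x
  continuousOn_deriv : ContinuousOn G' (Icc l r)
  map_left : G l = 0
  map_mid : G m = 0
  map_right : G r = 0
  pos : ∀ x ∈ Ioo l m, 0 < G x
  neg : ∀ x ∈ Ioo m r, G x < 0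
  deriv_mid_neg : G' m < 0

namespace IsBistable

variable {G G' a b p q : ℝ → ℝ} {l m r μ ν : ℝ}

theorem isHump (hG : IsBistable G G' l m r) : IsHump G G' l m where
  lt := hG.lt_mid
  hasDerivAt x hx := hG.hasDerivAt x (Icc_subset_Icc_right hG.mid_lt.le hx)
  continuousOn_deriv := hG.continuousOn_deriv.mono (Icc_subset_Icc_right hG.mid_lt.le)
  map_left := hG.map_left
  map_right := hG.map_mid
  pos := hG.pos
  deriv_right_neg := hG.deriv_mid_neg

theorem reflect (hG : IsBistable G G' l m r) :
    IsBistable (fun s => -G (-s)) (fun s => G' (-s)) (-r) (-m) (-l) where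
  lt_mid := neg_lt_neg hG.mid_lt
  mid_lt := neg_lt_neg hG.lt_mid
  hasDerivAt x hx := by
    have h := hG.hasDerivAt (-x) ⟨le_neg_of_le_neg hx.2, neg_le_of_neg_le hx.1⟩
    exact (h.comp x (hasDerivAt_neg x)).neg.congr_deriv (by ring)
  continuousOn_deriv := hG.continuousOn_deriv.comp continuous_neg.continuousOn
    fun _ hx => ⟨le_neg_of_le_neg hx.2, neg_le_of_neg_le hx.1⟩
  map_left := by simp [hG.map_right]
  map_mid := by simp [hG.map_mid]
  map_right := by simp [hG.map_left]
  pos x hx := neg_pos.2 (hG.neg (-x) ⟨lt_neg_of_lt_neg hx.2, neg_lt_of_neg_lt hx.1⟩)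
  neg x hx := neg_neg_of_pos (hG.pos (-x) ⟨lt_neg_of_lt_neg hx.2, neg_lt_of_neg_lt hx.1⟩)
  deriv_mid_neg := by simpa using hG.deriv_mid_neg

theorem continuousAt_mid (hG : IsBistable G G' l m r) : ContinuousAt G m :=
  (hG.hasDerivAt m ⟨hG.lt_mid.le, hG.mid_lt.le⟩).continuousAt

theorem exists_endpoint_maps (hG : IsBistable G G' l m r) (ha : ContinuousOn a (Icc l r))
    (hb : ContinuousOn b (Icc l r)) (hb₀ : ∀ x ∈ Icc l r, 0 < b x) :
    ∃ e d : ℝ → ℝ, Continuous (e - d) ∧ Tendsto (e - d) atTop atTop ∧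
      Tendsto (e - d) atBot atBot ∧ ∀ μ,
      (∃ p, IsProfile G (fun x => a x + μ * b x) l m p ∧ p l = 0 ∧ p m = e μ) ∧
      (∃ q, IsProfile G (fun x => a x + μ * b x) m r q ∧ q r = 0 ∧ q m = d μ) := by
  have hlm : Icc l m ⊆ Icc l r := Icc_subset_Icc_right hG.mid_lt.le
  have hmr : MapsTo Neg.neg (Icc (-r) (-m)) (Icc l r) := fun x hx =>
    ⟨hG.lt_mid.le.trans (le_neg_of_le_neg hx.2), neg_le_of_neg_le hx.1⟩
  have hneg : ContinuousOn Neg.neg (Icc (-r) (-m)) := continuous_neg.continuousOn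
  obtain ⟨e, he, he_mono, he_top, hp⟩ :=
    hG.isHump.exists_endpoint_map (ha.mono hlm) (hb.mono hlm) fun x hx => hb₀ x (hlm hx)
  obtain ⟨d, hd, hd_mono, hd_top, hq⟩ := hG.reflect.isHump.exists_endpoint_map
    (a := fun s => -a (-s)) (b := fun s => b (-s)) (ha.comp hneg hmr).neg (hb.comp hneg hmr)
    fun x hx => hb₀ _ (hmr hx)
  refine ⟨e, fun μ => d (-μ), he.sub (hd.comp continuous_neg), ?_, ?_, fun μ => ⟨hp μ, ?_⟩⟩
  · refine tendsto_atTop_add_right_of_le' _ (-d 0) he_top ?_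
    filter_upwards [eventually_ge_atTop 0] with μ hμ
    exact neg_le_neg (hd_mono (neg_nonpos.2 hμ))
  · refine tendsto_atBot_add_left_of_ge' _ (e 0) ?_ ?_
    · filter_upwards [eventually_le_atBot 0] with μ hμ using he_mono hμ
    · exact tendsto_neg_atTop_atBot.comp (hd_top.comp tendsto_neg_atBot_atTop)
  · obtain ⟨q, hq, hqr, hqm⟩ := hq (-μ)
    refine ⟨fun s => q (-s), ?_, hqr, hqm⟩
    simpa [add_comm] using hq.reflect

theorem exists_isProfile (hG : IsBistable G G' l m r) (ha : ContinuousOn a (Icc l r))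
    (hb : ContinuousOn b (Icc l r)) (hb₀ : ∀ x ∈ Icc l r, 0 < b x) :
    ∃ μ p, IsProfile G (fun x => a x + μ * b x) l r p ∧ p l = 0 ∧ p r = 0 := by
  obtain ⟨e, d, hcont, htop, hbot, hpq⟩ := hG.exists_endpoint_maps ha hb hb₀
  obtain ⟨μ, hμ⟩ := hcont.surjective htop hbot 0
  obtain ⟨⟨p, hp, hpl, hpm⟩, q, hq, hqr, hqm⟩ := hpq μ
  have hpq_mid : p m = q m := by rw [hpm, hqm]; exact sub_eq_zero.1 hμ
  have hA : ContinuousOn (fun x => a x + μ * b x) (Icc l r) := ha.add (hb.const_mul μ)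
  have hpos : 0 < p m := by
    rcases le_total 0 (a m + μ * b m) with h | h
    · exact hG.isHump.right_pos hp (hA.mono (Icc_subset_Icc_right hG.mid_lt.le)) h
    · have := hG.reflect.isHump.right_pos hq.reflect ((hA.comp continuous_neg.continuousOn
        fun x hx => ⟨hG.lt_mid.le.trans (le_neg_of_le_neg hx.2), neg_le_of_neg_le hx.1⟩).neg)
        (neg_nonneg.2 (by simpa using h))
      rwa [hpq_mid, ← neg_neg m]
  refine ⟨μ, _, hp.glue hq hG.lt_mid hG.mid_lt hpq_mid hpos hG.continuousAt_mid
    (hA.continuousAt (Icc_mem_nhds hG.lt_mid hG.mid_lt)), ?_, ?_⟩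
  · rwa [if_pos hG.lt_mid.le]
  · rwa [if_neg hG.mid_lt.not_ge]

theorem isProfile_le_left (hG : IsBistable G G' l m r) (hb₀ : ∀ x ∈ Icc l r, 0 < b x)
    (hμν : μ ≤ ν) (hp : IsProfile G (fun x => a x + μ * b x) l r p)
    (hq : IsProfile G (fun x => a x + ν * b x) l r q) (hl : p l ≤ q l) {x : ℝ}
    (hx : x ∈ Icc l m) : p x ≤ q x := by
  refine (hp.mono le_rfl hG.mid_lt.le).le_of_le (hq.mono le_rfl hG.mid_lt.le) hl
    (fun _ _ => le_rfl) (fun x hx => (hG.pos x hx).le) (fun x hx => ?_) hx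
  have : 0 < b x := hb₀ x ⟨hx.1.le, hx.2.le.trans hG.mid_lt.le⟩
  gcongr

theorem isProfile_le_right (hG : IsBistable G G' l m r) (hb₀ : ∀ x ∈ Icc l r, 0 < b x)
    (hμν : μ ≤ ν) (hp : IsProfile G (fun x => a x + μ * b x) l r p)
    (hq : IsProfile G (fun x => a x + ν * b x) l r q) (hr : q r ≤ p r) {x : ℝ}
    (hx : x ∈ Icc m r) : q x ≤ p x := by
  have hp' := hp.reflect
  have hq' := hq.reflect
  simp only [neg_add, ← neg_mul] at hp' hq'
  have := hG.reflect.isProfile_le_left (a := fun s => -a (-s)) (b := fun s => b (-s))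
    (fun x hx => hb₀ _ ⟨le_neg_of_le_neg hx.2, neg_le_of_neg_le hx.1⟩) (neg_le_neg hμν) hq' hp'
    (by simpa using hr) (x := -x) ⟨neg_le_neg hx.2, neg_le_neg hx.1⟩
  simpa using this

theorem isProfile_param_le (hG : IsBistable G G' l m r) (hb₀ : ∀ x ∈ Icc l r, 0 < b x)
    (hp : IsProfile G (fun x => a x + μ * b x) l r p) (hpl : p l = 0) (hpr : p r = 0)
    (hq : IsProfile G (fun x => a x + ν * b x) l r q) (hql : q l = 0) (hqr : q r = 0) :
    ν ≤ μ := by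
  by_contra! hμν
  have hm : m ∈ Ioo l r := ⟨hG.lt_mid, hG.mid_lt⟩
  have hright : ∀ x ∈ Icc m r, q x ≤ p x := fun x =>
    hG.isProfile_le_right hb₀ hμν.le hp hq (by rw [hqr, hpr])
  have hmid : q m = p m := (hright m (left_mem_Icc.2 hG.mid_lt.le)).antisymm
    (hG.isProfile_le_left hb₀ hμν.le hp hq (by rw [hpl, hql]) (right_mem_Icc.2 hG.lt_mid.le))
  have hderiv : HasDerivAt (q - p) ((ν - μ) * b m) m :=
    ((hq.hasDerivAt m hm).sub (hp.hasDerivAt m hm)).congr_deriv (by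
      rw [hG.map_mid, zero_div, zero_div]
      ring)
  have hnonpos : (ν - μ) * b m ≤ 0 := by
    refine le_of_tendsto (hderiv.tendsto_slope.mono_left (nhdsGT_le_nhdsNE m)) ?_
    filter_upwards [Ioo_mem_nhdsGT hG.mid_lt] with x hx
    rw [slope_def_field]
    refine div_nonpos_of_nonpos_of_nonneg ?_ (sub_nonneg.2 hx.1.le)
    simpa [hmid] using hright x (Ioo_subset_Icc_self hx)
  exact hnonpos.not_gt (mul_pos (sub_pos.2 hμν) (hb₀ m (Ioo_subset_Icc_self hm)))

end IsBistable

/-! ### Time maps -/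

theorem exists_hasDerivAt_of_continuousOn_Ioo {f : ℝ → ℝ} {l r : ℝ}
    (hf : ContinuousOn f (Ioo l r)) : ∃ T : ℝ → ℝ, ∀ x ∈ Ioo l r, HasDerivAt T (f x) x := by
  rcases (Ioo l r).eq_empty_or_nonempty with h | ⟨c, hc⟩
  · exact ⟨0, by simp [h]⟩
  refine ⟨fun x => ∫ t in c..x, f t, fun x hx => intervalIntegral.integral_hasDerivAt_right
    (hf.mono (ordConnected_Ioo.uIcc_subset hc hx)).intervalIntegrable
    (hf.stronglyMeasurableAtFilter isOpen_Ioo x hx)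
    (hf.continuousAt (Ioo_mem_nhds hx.1 hx.2))⟩

theorem tendsto_nhdsLT_atTop_of_deriv_ge {T T' : ℝ → ℝ} {l r Λ : ℝ} (hlr : l < r) (hΛ : 0 < Λ)
    (hT : ∀ x ∈ Ioo l r, HasDerivAt T (T' x) x) (hT' : ∀ x ∈ Ioo l r, (Λ * (r - x))⁻¹ ≤ T' x) :
    Tendsto T (𝓝[<] r) atTop := by
  have hderiv : ∀ x ∈ Ioo l r, HasDerivAt (fun x => T x + Λ⁻¹ * Real.log (r - x))
      (T' x + Λ⁻¹ * (-1 / (r - x))) x := fun x hx =>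
    (hT x hx).add ((((hasDerivAt_id x).const_sub r).log (sub_pos.2 hx.2).ne').const_mul _)
  have hmono : MonotoneOn (fun x => T x + Λ⁻¹ * Real.log (r - x)) (Ioo l r) := by
    refine monotoneOn_of_hasDerivWithinAt_nonneg (convex_Ioo l r)
      (f' := fun x => T' x + Λ⁻¹ * (-1 / (r - x)))
      (fun x hx => (hderiv x hx).continuousAt.continuousWithinAt) ?_ ?_ <;>
      rw [interior_Ioo] <;> intro x hx
    · exact (hderiv x hx).hasDerivWithinAt
    · have := hT' x hx
      rw [mul_inv] at this
      rw [neg_div, one_div]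
      linarith
  obtain ⟨c, hc⟩ := exists_between hlr
  have hlog : Tendsto (fun x => Real.log (r - x)) (𝓝[<] r) atBot := by
    refine Real.tendsto_log_nhdsGT_zero.comp (tendsto_nhdsWithin_iff.2 ⟨?_, ?_⟩)
    · exact tendsto_nhdsWithin_of_tendsto_nhds ((continuous_const.sub continuous_id).tendsto' _ _
        (sub_self r))
    · filter_upwards [self_mem_nhdsWithin] with x hx using sub_pos.2 (mem_Iio.1 hx)
  refine tendsto_atTop_mono' _ ?_ (tendsto_atTop_add_const_left _ (T c + Λ⁻¹ * Real.log (r - c))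
    (tendsto_neg_atBot_atTop.comp (hlog.const_mul_atBot (inv_pos.2 hΛ))))
  filter_upwards [Ioo_mem_nhdsLT hc.2] with x hx
  have := hmono hc ⟨hc.1.trans hx.1, hx.2⟩ hx.1.le
  simp only [Function.comp_apply] at this ⊢
  linarith

theorem tendsto_nhdsGT_atBot_of_deriv_ge {T T' : ℝ → ℝ} {l r Λ : ℝ} (hlr : l < r) (hΛ : 0 < Λ)
    (hT : ∀ x ∈ Ioo l r, HasDerivAt T (T' x) x) (hT' : ∀ x ∈ Ioo l r, (Λ * (x - l))⁻¹ ≤ T' x) :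
    Tendsto T (𝓝[>] l) atBot := by
  have hmem : ∀ x ∈ Ioo (-r) (-l), -x ∈ Ioo l r := fun x hx =>
    ⟨lt_neg_of_lt_neg hx.2, neg_lt_of_neg_lt hx.1⟩
  have hrefl : Tendsto (fun s => -T (-s)) (𝓝[<] (-l)) atTop :=
    tendsto_nhdsLT_atTop_of_deriv_ge (T' := fun s => T' (-s)) (neg_lt_neg hlr) hΛ
      (fun x hx => ((hT _ (hmem x hx)).comp x (hasDerivAt_neg x)).neg.congr_deriv (by ring))
      fun x hx => by simpa [add_comm, sub_eq_add_neg] using hT' _ (hmem x hx)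
  simpa [Function.comp_def] using
    tendsto_neg_atTop_atBot.comp (hrefl.comp (tendsto_neg_nhdsGT (a := l)))

theorem exists_hasDerivAt_inv_of_strictMonoOn {T T' : ℝ → ℝ} {l r : ℝ} (hlr : l < r)
    (hT : ∀ x ∈ Ioo l r, HasDerivAt T (T' x) x) (hT' : ∀ x ∈ Ioo l r, 0 < T' x)
    (hbot : Tendsto T (𝓝[>] l) atBot) (htop : Tendsto T (𝓝[<] r) atTop) :
    ∃ U : ℝ → ℝ, (∀ z, U z ∈ Ioo l r) ∧ (∀ z, HasDerivAt U (T' (U z))⁻¹ z) ∧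
      Tendsto U atBot (𝓝[>] l) ∧ Tendsto U atTop (𝓝[<] r) := by
  have hTc : ContinuousOn T (Ioo l r) := fun x hx => (hT x hx).continuousAt.continuousWithinAt
  have hmono : StrictMonoOn T (Ioo l r) := by
    refine strictMonoOn_of_deriv_pos (convex_Ioo l r) hTc fun x hx => ?_
    rw [interior_Ioo] at hx
    exact (hT x hx).deriv.symm ▸ hT' x hx
  have hsurj : SurjOn T (Ioo l r) univ := hTc.surjOn_of_tendsto (nonempty_Ioo.2 hlr)
    ((tendsto_comp_coe_Ioo_atBot hlr).2 hbot) ((tendsto_comp_coe_Ioo_atTop hlr).2 htop)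
  let e : Ioo l r ≃o ℝ := StrictMono.orderIsoOfSurjective (fun x : Ioo l r => T x)
    (fun x y hxy => hmono x.2 y.2 hxy) fun z => by
      obtain ⟨x, hx, hxz⟩ := hsurj (mem_univ z)
      exact ⟨⟨x, hx⟩, hxz⟩
  refine ⟨fun z => e.symm z, fun z => (e.symm z).2, fun z => ?_,
    (tendsto_Ioo_atBot).1 e.symm.tendsto_atBot, (tendsto_Ioo_atTop).1 e.symm.tendsto_atTop⟩
  exact (hT _ (e.symm z).2).of_local_left_inverse
    (continuous_subtype_val.comp e.symm.continuous).continuousAt (hT' _ (e.symm z).2).ne'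
    (.of_forall e.apply_symm_apply)

theorem mem_Ioo_of_strictMono_of_tendsto {u : ℝ → ℝ} {l r : ℝ} (hu : StrictMono u)
    (hbot : Tendsto u atBot (𝓝 l)) (htop : Tendsto u atTop (𝓝 r)) (z : ℝ) : u z ∈ Ioo l r :=
  ⟨(hu.monotone.le_of_tendsto hbot (z - 1)).trans_lt (hu (sub_one_lt z)),
    (hu (lt_add_one z)).trans_le (hu.monotone.ge_of_tendsto htop (z + 1))⟩

theorem exists_hasDerivAt_inv_of_strictMono {u w : ℝ → ℝ} {l r : ℝ}
    (hu : ∀ z, HasDerivAt u (w z) z) (hw : ∀ z, 0 < w z) (hbot : Tendsto u atBot (𝓝 l))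
    (htop : Tendsto u atTop (𝓝 r)) :
    ∃ Z : ℝ → ℝ, (∀ x ∈ Ioo l r, u (Z x) = x ∧ HasDerivAt Z (w (Z x))⁻¹ x) ∧
      Tendsto Z (𝓝[>] l) atBot ∧ Tendsto Z (𝓝[<] r) atTop := by
  have hmono : StrictMono u := strictMono_of_hasDerivAt_pos hu hw
  have hmem := mem_Ioo_of_strictMono_of_tendsto hmono hbot htop
  have hlr : l < r := (hmem 0).1.trans (hmem 0).2
  have hcont : Continuous u := continuous_iff_continuousAt.2 fun z => (hu z).continuousAt
  let e : ℝ ≃o Ioo l r := StrictMono.orderIsoOfSurjective (fun z => ⟨u z, hmem z⟩)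
    (fun x y hxy => hmono hxy) fun x => by
      obtain ⟨a, ha⟩ := (hbot.eventually_lt_const x.2.1).exists
      obtain ⟨b, hb⟩ := (htop.eventually_const_lt x.2.2).exists
      obtain ⟨z, hz⟩ := mem_range_of_exists_le_of_exists_ge hcont ⟨a, ha.le⟩ ⟨b, hb.le⟩
      exact ⟨z, Subtype.ext hz⟩
  let Z : ℝ → ℝ := Function.extend Subtype.val e.symm 0
  have hZ : ∀ x : Ioo l r, Z x = e.symm x := Subtype.val_injective.extend_apply _ _
  have huZ : ∀ x ∈ Ioo l r, u (Z x) = x := fun x hx => by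
    rw [hZ ⟨x, hx⟩]
    exact congrArg Subtype.val (e.apply_symm_apply ⟨x, hx⟩)
  have hZc : ContinuousOn Z (Ioo l r) := by
    rw [continuousOn_iff_continuous_domRestrict]
    exact e.symm.continuous.congr fun x => (hZ x).symm
  refine ⟨Z, fun x hx => ⟨huZ x hx, (hu (Z x)).of_local_left_inverse
    (hZc.continuousAt (Ioo_mem_nhds hx.1 hx.2)) (hw _).ne' ?_⟩, ?_, ?_⟩
  · filter_upwards [Ioo_mem_nhds hx.1 hx.2] with y hy using huZ y hy
  · exact (tendsto_comp_coe_Ioo_atBot hlr).1 (e.symm.tendsto_atBot.congr fun x => (hZ x).symm)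
  · exact (tendsto_comp_coe_Ioo_atTop hlr).1 (e.symm.tendsto_atTop.congr fun x => (hZ x).symm)

/-! ### Heteroclinic orbits -/

theorem IsBistable.exists_le_linear_left {G G' A p : ℝ → ℝ} {l m r : ℝ}
    (hG : IsBistable G G' l m r) (hA : ContinuousOn A (Icc l r)) (hp : IsProfile G A l r p)
    (hpl : p l = 0) : ∃ Λ > 0, ∀ x ∈ Icc l r, p x ≤ Λ * (x - l) := by
  have hl : l ∈ Icc l r := left_mem_Icc.2 (hG.lt_mid.trans hG.mid_lt).le
  obtain ⟨M, hM⟩ := isCompact_Icc.exists_bound_of_continuousOn hG.continuousOn_deriv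
  obtain ⟨N, hN⟩ := isCompact_Icc.exists_bound_of_continuousOn hA
  have hM₀ : 0 ≤ M := (norm_nonneg _).trans (hM l hl)
  have hN₀ : 0 ≤ N := (norm_nonneg _).trans (hN l hl)
  refine ⟨M + N + 1, by positivity, fun x hx => hp.le_linear hpl.le hM₀ hN₀ (fun y hy => ?_)
    (fun y hy => (le_abs_self _).trans (hN y (Ioo_subset_Icc_self hy))) hx⟩
  have := (convex_Icc l r).norm_image_sub_le_of_norm_hasDerivWithin_le
    (fun x hx => (hG.hasDerivAt x hx).hasDerivWithinAt) hM hl (Ioo_subset_Icc_self hy)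
  rw [hG.map_left, sub_zero, Real.norm_of_nonneg (sub_nonneg.2 hy.1.le)] at this
  exact (le_abs_self _).trans this

theorem IsBistable.exists_le_linear_right {G G' A p : ℝ → ℝ} {l m r : ℝ}
    (hG : IsBistable G G' l m r) (hA : ContinuousOn A (Icc l r)) (hp : IsProfile G A l r p)
    (hpr : p r = 0) : ∃ Λ > 0, ∀ x ∈ Icc l r, p x ≤ Λ * (r - x) := by
  have hA' : ContinuousOn (fun s => -A (-s)) (Icc (-r) (-l)) :=
    (hA.comp continuous_neg.continuousOn
      fun _ hx => ⟨le_neg_of_le_neg hx.2, neg_le_of_neg_le hx.1⟩).neg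
  obtain ⟨Λ, hΛ, h⟩ := hG.reflect.exists_le_linear_left hA' hp.reflect (by simpa using hpr)
  refine ⟨Λ, hΛ, fun x hx => ?_⟩
  simpa [add_comm, sub_eq_add_neg] using h (-x) ⟨neg_le_neg hx.2, neg_le_neg hx.1⟩

/-- `(u, w)` is a solution, defined for all times, of the planar system `u' = w`,
`w' = G(u) + A(u) w`. -/
structure IsTrajectory (G A u w : ℝ → ℝ) : Prop where
  hasDerivAt_fst : ∀ z, HasDerivAt u (w z) z
  hasDerivAt_snd : ∀ z, HasDerivAt w (G (u z) + A (u z) * w z) z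

theorem HE1.mem_Ioo {G A u w : ℝ → ℝ} {l r : ℝ} (h : HE1 l r u w) (hs : IsTrajectory G A u w)
    (z : ℝ) : u z ∈ Ioo l r :=
  mem_Ioo_of_strictMono_of_tendsto (strictMono_of_hasDerivAt_pos hs.hasDerivAt_fst h.2.2.2.2)
    h.1 h.2.1 z

theorem HE1.reverse {l r : ℝ} {u w : ℝ → ℝ} (h : HE1 l r u w) :
    HE2 l r (fun z => u (-z)) (fun z => -w (-z)) := by
  obtain ⟨hbot, htop, hwbot, hwtop, hw⟩ := h
  refine ⟨htop.comp tendsto_neg_atBot_atTop, hbot.comp tendsto_neg_atTop_atBot, ?_, ?_,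
    fun z => neg_neg_of_pos (hw (-z))⟩
  · simpa using (hwtop.comp tendsto_neg_atBot_atTop).neg
  · simpa using (hwbot.comp tendsto_neg_atTop_atBot).neg

theorem HE2.reverse {l r : ℝ} {u w : ℝ → ℝ} (h : HE2 l r u w) :
    HE1 l r (fun z => u (-z)) (fun z => -w (-z)) := by
  obtain ⟨hbot, htop, hwbot, hwtop, hw⟩ := h
  refine ⟨htop.comp tendsto_neg_atBot_atTop, hbot.comp tendsto_neg_atTop_atBot, ?_, ?_,
    fun z => neg_pos_of_neg (hw (-z))⟩
  · simpa using (hwtop.comp tendsto_neg_atBot_atTop).neg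
  · simpa using (hwbot.comp tendsto_neg_atTop_atBot).neg

namespace IsTrajectory

variable {G A u w : ℝ → ℝ} {l r : ℝ}

theorem reverse (h : IsTrajectory G A u w) :
    IsTrajectory G (fun x => -A x) (fun z => u (-z)) (fun z => -w (-z)) where
  hasDerivAt_fst z :=
    ((h.hasDerivAt_fst (-z)).comp z (hasDerivAt_neg z)).congr_deriv (mul_neg_one _)
  hasDerivAt_snd z :=
    ((h.hasDerivAt_snd (-z)).comp z (hasDerivAt_neg z)).neg.congr_deriv (by ring)

theorem exists_isProfile (hs : IsTrajectory G A u w) (h : HE1 l r u w) :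
    ∃ p, IsProfile G A l r p ∧ p l = 0 ∧ p r = 0 := by
  have hmem := h.mem_Ioo hs
  obtain ⟨hbot, htop, hwbot, hwtop, hw⟩ := h
  have hlr : l < r := (hmem 0).1.trans (hmem 0).2
  obtain ⟨Z, hZ, hZbot, hZtop⟩ :=
    exists_hasDerivAt_inv_of_strictMono hs.hasDerivAt_fst hw hbot htop
  have hderiv : ∀ x ∈ Ioo l r, HasDerivAt (w ∘ Z) (G x / w (Z x) + A x) x := fun x hx =>
    ((hs.hasDerivAt_snd (Z x)).comp x (hZ x hx).2).congr_deriv (by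
      rw [(hZ x hx).1, ← div_eq_mul_inv, add_div, mul_div_cancel_right₀ _ (hw _).ne'])
  have hcont : ContinuousOn (w ∘ Z) (Ioo l r) := fun x hx =>
    (hderiv x hx).continuousAt.continuousWithinAt
  have hleft : Tendsto (w ∘ Z) (𝓝[>] l) (𝓝 0) := hwbot.comp hZbot
  have hright : Tendsto (w ∘ Z) (𝓝[<] r) (𝓝 0) := hwtop.comp hZtop
  have heq : ∀ x ∈ Ioo l r, extendFrom (Ioo l r) (w ∘ Z) x = w (Z x) := extendFrom_extends hcont
  refine ⟨extendFrom (Ioo l r) (w ∘ Z),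
    ⟨continuousOn_Icc_extendFrom_Ioo hcont hleft hright, fun x hx => ?_, fun x hx => ?_⟩,
    eq_lim_at_left_extendFrom_Ioo hlr hleft, eq_lim_at_right_extendFrom_Ioo hlr hright⟩
  · exact (heq x hx).symm ▸ hw _
  · rw [heq x hx]
    exact (hderiv x hx).congr_of_eventuallyEq
      (EqOn.eventuallyEq_of_mem heq (Ioo_mem_nhds hx.1 hx.2))

end IsTrajectory

theorem IsProfile.exists_isTrajectory {G A p : ℝ → ℝ} {l r Λ Λ' : ℝ} (hp : IsProfile G A l r p)
    (hlr : l < r) (hpl : p l = 0) (hpr : p r = 0) (hΛ : 0 < Λ) (hΛ' : 0 < Λ')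
    (hleft : ∀ x ∈ Icc l r, p x ≤ Λ * (x - l)) (hright : ∀ x ∈ Icc l r, p x ≤ Λ' * (r - x)) :
    ∃ u w, IsTrajectory G A u w ∧ HE1 l r u w := by
  have hinv : ∀ x ∈ Ioo l r, 0 < (p x)⁻¹ := fun x hx => inv_pos.2 (hp.pos x hx)
  obtain ⟨T, hT⟩ := exists_hasDerivAt_of_continuousOn_Ioo (f := fun x => (p x)⁻¹)
    ((hp.continuousOn.mono Ioo_subset_Icc_self).inv₀ fun x hx => (hp.pos x hx).ne')
  obtain ⟨U, hU, hUderiv, hUbot, hUtop⟩ := exists_hasDerivAt_inv_of_strictMonoOn hlr hT hinv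
    (tendsto_nhdsGT_atBot_of_deriv_ge hlr hΛ hT fun x hx =>
      inv_anti₀ (hp.pos x hx) (hleft x (Ioo_subset_Icc_self hx)))
    (tendsto_nhdsLT_atTop_of_deriv_ge hlr hΛ' hT fun x hx =>
      inv_anti₀ (hp.pos x hx) (hright x (Ioo_subset_Icc_self hx)))
  simp only [inv_inv] at hUderiv
  have hp_tendsto : ∀ {f : Filter ℝ} {x : ℝ}, x ∈ Icc l r → Tendsto U f (𝓝 x) →
      Tendsto (p ∘ U) f (𝓝 (p x)) := fun hx hUx => (hp.continuousOn _ hx).tendsto.comp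
    (tendsto_nhdsWithin_iff.2 ⟨hUx, .of_forall fun z => Ioo_subset_Icc_self (hU z)⟩)
  have hUbot' := hUbot.mono_right nhdsWithin_le_nhds
  have hUtop' := hUtop.mono_right nhdsWithin_le_nhds
  refine ⟨U, p ∘ U, ⟨hUderiv, fun z => ?_⟩, hUbot', hUtop',
    hpl ▸ hp_tendsto (left_mem_Icc.2 hlr.le) hUbot',
    hpr ▸ hp_tendsto (right_mem_Icc.2 hlr.le) hUtop', fun z => hp.pos _ (hU z)⟩
  refine ((hp.hasDerivAt _ (hU z)).comp z (hUderiv z)).congr_deriv ?_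
  rw [add_mul, div_mul_cancel₀ _ (hp.pos _ (hU z)).ne', Function.comp_apply]

theorem IsBistable.exists_heteroclinic_iff {G G' a b : ℝ → ℝ} {l m r : ℝ}
    (hG : IsBistable G G' l m r) (ha : ContinuousOn a (Icc l r)) (hb : ContinuousOn b (Icc l r))
    (hb₀ : ∀ x ∈ Icc l r, 0 < b x) :
    ∃ μ₀ : ℝ, ∀ μ : ℝ,
      (∃ u w, IsTrajectory G (fun x => a x + μ * b x) u w ∧ HE1 l r u w) ↔ μ = μ₀ := by
  obtain ⟨μ₀, p, hp, hpl, hpr⟩ := hG.exists_isProfile ha hb hb₀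
  refine ⟨μ₀, fun μ => ⟨?_, ?_⟩⟩
  · rintro ⟨u, w, hs, h⟩
    obtain ⟨q, hq, hql, hqr⟩ := hs.exists_isProfile h
    exact (hG.isProfile_param_le hb₀ hp hpl hpr hq hql hqr).antisymm
      (hG.isProfile_param_le hb₀ hq hql hqr hp hpl hpr)
  · rintro rfl
    have hA : ContinuousOn (fun x => a x + μ * b x) (Icc l r) := ha.add (hb.const_mul μ)
    obtain ⟨Λ, hΛ, hleft⟩ := hG.exists_le_linear_left hA hp hpl
    obtain ⟨Λ', hΛ', hright⟩ := hG.exists_le_linear_right hA hp hpr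
    exact hp.exists_isTrajectory (hG.lt_mid.trans hG.mid_lt) hpl hpr hΛ hΛ' hleft hright

/-! ### The traveling-wave system -/

theorem slope_lt_max_slope {f f' : ℝ → ℝ} {a b c d : ℝ} (hab : a < b) (hbc : b < c) (hcd : c < d)
    (hf : ∀ x ∈ Icc a d, HasDerivAt f (f' x) x)
    (hf' : ∀ x y z, a < x → x < y → y < z → z < d → f' y < max (f' x) (f' z)) :
    slope f b c < max (slope f a b) (slope f c d) := by
  have hmvt : ∀ x y, a ≤ x → x < y → y ≤ d → ∃ ξ ∈ Ioo x y, f' ξ = slope f x y :=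
    fun x y hax hxy hyd => by
      simpa only [slope_def_field] using exists_hasDerivAt_eq_slope f f' hxy
        (fun t ht => (hf t ⟨hax.trans ht.1, ht.2.trans hyd⟩).continuousAt.continuousWithinAt)
        fun t ht => hf t ⟨hax.trans ht.1.le, ht.2.le.trans hyd⟩
  obtain ⟨ξ, hξ, hξ_eq⟩ := hmvt a b le_rfl hab (hbc.trans hcd).le
  obtain ⟨η, hη, hη_eq⟩ := hmvt b c hab.le hbc hcd.le
  obtain ⟨ζ, hζ, hζ_eq⟩ := hmvt c d (hab.trans hbc).le hcd le_rfl
  rw [← hξ_eq, ← hη_eq, ← hζ_eq]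
  exact hf' ξ η ζ hξ.1 (hξ.2.trans hη.1) (hη.2.trans hζ.1) hζ.2

theorem signs_of_three_zeros {f f' : ℝ → ℝ} {l m r : ℝ} (hlm : l < m) (hmr : m < r)
    (hf : ∀ x ∈ Icc l r, HasDerivAt f (f' x) x)
    (hf' : ∀ x y z, l < x → x < y → y < z → z < r → f' y < max (f' x) (f' z))
    (hl : f l = 0) (hm : f m = 0) (hr : f r = 0) :
    (∀ x ∈ Ioo l m, 0 < f x) ∧ (∀ x ∈ Ioo m r, f x < 0) ∧ f' m < 0 := by
  refine ⟨fun x hx => ?_, fun x hx => ?_, ?_⟩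
  · by_contra! hfx
    have hslope := slope_lt_max_slope hx.1 hx.2 hmr hf hf'
    simp only [slope_def_field, hl, hm, hr, sub_zero, zero_sub, zero_div] at hslope
    exact hslope.not_ge ((max_le (div_nonpos_of_nonpos_of_nonneg hfx (sub_nonneg.2 hx.1.le))
      le_rfl).trans (div_nonneg (neg_nonneg.2 hfx) (sub_nonneg.2 hx.2.le)))
  · by_contra! hfx
    have hslope := slope_lt_max_slope hlm hx.1 hx.2 hf hf'
    simp only [slope_def_field, hl, hm, hr, sub_zero, zero_sub, zero_div] at hslope
    exact hslope.not_ge ((max_le le_rfl (div_nonpos_of_nonpos_of_nonneg (neg_nonpos.2 hfx)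
      (sub_nonneg.2 hx.2.le))).trans (div_nonneg hfx (sub_nonneg.2 hx.1.le)))
  · have hcont : ContinuousOn f (Icc l r) := fun x hx => (hf x hx).continuousAt.continuousWithinAt
    obtain ⟨ξ, hξ, hξ₀⟩ := exists_hasDerivAt_eq_zero hlm
      (hcont.mono (Icc_subset_Icc_right hmr.le)) (hl.trans hm.symm)
      fun x hx => hf x ⟨hx.1.le, hx.2.le.trans hmr.le⟩
    obtain ⟨ζ, hζ, hζ₀⟩ := exists_hasDerivAt_eq_zero hmr
      (hcont.mono (Icc_subset_Icc_left hlm.le)) (hm.trans hr.symm)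
      fun x hx => hf x ⟨hlm.le.trans hx.1.le, hx.2.le⟩
    simpa [hξ₀, hζ₀] using hf' ξ m ζ hξ.1 hξ.2 hζ.1 hζ.2

theorem injOn_Icc_of_deriv_ne_zero {f f' : ℝ → ℝ} {l r : ℝ} (hf : ContinuousOn f (Icc l r))
    (hderiv : ∀ x ∈ Ioo l r, HasDerivAt f (f' x) x) (hne : ∀ x ∈ Ioo l r, f' x ≠ 0) :
    InjOn f (Icc l r) := by
  have hlt : ∀ x ∈ Icc l r, ∀ y ∈ Icc l r, x < y → f x ≠ f y := fun x hx y hy hxy heq => by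
    obtain ⟨ξ, hξ, hξ₀⟩ := exists_hasDerivAt_eq_zero hxy (hf.mono (Icc_subset_Icc hx.1 hy.2)) heq
      fun t ht => hderiv t (Ioo_subset_Ioo hx.1 hy.2 ht)
    exact hne ξ (Ioo_subset_Ioo hx.1 hy.2 hξ) hξ₀
  intro x hx y hy heq
  rcases lt_trichotomy x y with h | h | h
  exacts [absurd heq (hlt x hx y hy h), h, absurd heq.symm (hlt y hy x hx h)]

namespace A1

variable {V V' V'' : ℝ → ℝ} {UM K c x y z : ℝ}

theorem injOn_Icc (hV : A1 V V' V'' UM) {s t : ℝ} (hs : 0 < s) (hst : UM ∉ Ioo s t) :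
    InjOn V' (Icc s t) := by
  obtain ⟨-, hV'c, hV'', -, -, -, -, -, -, hzero⟩ := hV
  refine injOn_Icc_of_deriv_ne_zero (hV'c.mono fun x hx => hs.le.trans hx.1)
    (fun x hx => hV'' x (hs.trans hx.1)) fun x hx hx₀ => ?_
  rw [hzero x (hs.trans hx.1)] at hx₀
  exact hst (hx₀ ▸ hx)

theorem min_deriv_lt (hV : A1 V V' V'' UM) (hx : 0 < x) (hxy : x < y) (hyz : y < z) :
    min (V' x) (V' z) < V' y := by
  have hcont := hV.2.1
  have hmax := hV.2.2.2.2.2.2.2.2.1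
  rcases le_or_gt y UM with hy | hy
  · refine (min_le_left _ _).trans_lt ?_
    exact ContinuousOn.strictMonoOn_of_injOn_Icc (hxy.le.trans hy) (hmax x hx)
      (hcont.mono fun t ht => hx.le.trans ht.1) (hV.injOn_Icc hx fun h => h.2.false)
      ⟨le_rfl, hxy.le.trans hy⟩ ⟨hxy.le, hy⟩ hxy
  · have hUM : 0 < UM := hV.2.2.2.2.2.2.2.1
    refine (min_le_right _ _).trans_lt ?_
    exact ContinuousOn.strictAntiOn_of_injOn_Icc (hy.trans hyz).le
      (hmax z (hx.trans (hxy.trans hyz))) (hcont.mono fun t ht => hUM.le.trans ht.1)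
      (hV.injOn_Icc hUM fun h => h.1.false) ⟨hy.le, hyz.le⟩ ⟨(hy.trans hyz).le, le_rfl⟩ hyz

theorem hasDerivAt_fTV (hV : A1 V V' V'' UM) (K c : ℝ) (hx : 0 < x) :
    HasDerivAt (fTV V K c) (fdTV V' K x) x := by
  have hVx : HasDerivAt V (V' x) x := (hV.1 x hx.le).hasDerivAt (Ici_mem_nhds hx)
  refine (((((hasDerivAt_id x).const_mul K).sub hVx).sub_const c).div_const K).congr_deriv ?_
  rw [mul_one, fdTV]

theorem continuousOn_fdTV (hV : A1 V V' V'' UM) (K : ℝ) : ContinuousOn (fdTV V' K) (Ioi 0) :=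
  (continuousOn_const.sub (hV.2.1.mono Ioi_subset_Ici_self)).div_const K

theorem fdTV_lt_max (hV : A1 V V' V'' UM) (hK : 0 < K) (hx : 0 < x) (hxy : x < y) (hyz : y < z) :
    fdTV V' K y < max (fdTV V' K x) (fdTV V' K z) := by
  refine lt_max_iff.2 ((min_lt_iff.1 (hV.min_deriv_lt hx hxy hyz)).imp ?_ ?_) <;>
    exact fun h => div_lt_div_of_pos_right (sub_lt_sub_left h K) hK

theorem pos_of_fTV_eq_zero (hV : A1 V V' V'' UM) (hK : K ≠ 0) (hx : 0 < x) (hxy : x < y)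
    (hfx : fTV V K c x = 0) (hfy : fTV V K c y = 0) : 0 < K := by
  obtain ⟨ξ, hξ, hξ₀⟩ := exists_hasDerivAt_eq_zero hxy
    (fun t ht => (hV.hasDerivAt_fTV K c (hx.trans_le ht.1)).continuousAt.continuousWithinAt)
    (hfx.trans hfy.symm) fun t ht => hV.hasDerivAt_fTV K c (hx.trans ht.1)
  have hKξ : K = V' ξ := sub_eq_zero.1 ((div_eq_zero_iff.1 hξ₀).resolve_right hK)
  exact hKξ ▸ hV.2.2.2.2.1 ξ (hx.trans hξ.1)

theorem fTV_signs (hV : A1 V V' V'' UM) (hK : K ≠ 0) {u1 u0 u2 : ℝ}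
    (hz : ZerosD1 V K c u1 u0 u2) :
    (∀ u ∈ Ioo u1 u0, 0 < fTV V K c u) ∧ (∀ u ∈ Ioo u0 u2, fTV V K c u < 0) ∧
      fdTV V' K u0 < 0 := by
  obtain ⟨hu1, h10, h02, hf1, hf0, hf2, -⟩ := hz
  exact signs_of_three_zeros h10 h02 (fun x hx => hV.hasDerivAt_fTV K c (hu1.trans_le hx.1))
    (fun x y z hx hxy hyz _ => hV.fdTV_lt_max (hV.pos_of_fTV_eq_zero hK hu1 h10 hf1 hf0)
      (hu1.trans hx) hxy hyz) hf1 hf0 hf2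

end A1

namespace A2

variable {κ : ℝ → ℝ} {τ u : ℝ}

theorem pos_comp_inv (hκ : A2 κ) (hu : 0 < u) : 0 < κ (1 / u) := hκ.2 _ (one_div_pos.2 hu)

theorem contDiffOn_comp_inv (hκ : A2 κ) : ContDiffOn ℝ 1 (fun u => κ (1 / u)) (Ioi 0) :=
  hκ.1.comp (contDiffOn_const.div contDiffOn_id fun _ hu => ne_of_gt hu)
    fun _ hu => mem_Ioi.2 (one_div_pos.2 hu)

theorem g1TV_pos (hκ : A2 κ) (hτ : 0 < τ) (hu : 0 < u) : 0 < g1TV κ τ u :=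
  one_div_pos.2 (mul_pos hτ (hκ.pos_comp_inv hu))

theorem g2TV_pos (hκ : A2 κ) (hτ : 0 < τ) (hu : 0 < u) : 0 < g2TV κ τ u :=
  div_pos hu (mul_pos (mul_pos two_pos hτ) (hκ.pos_comp_inv hu))

theorem contDiffOn_g1TV (hκ : A2 κ) (hτ : 0 < τ) : ContDiffOn ℝ 1 (g1TV κ τ) (Ioi 0) :=
  contDiffOn_const.div (contDiffOn_const.mul hκ.contDiffOn_comp_inv)
    fun _ hu => (mul_pos hτ (hκ.pos_comp_inv hu)).ne'

theorem continuousOn_g2TV (hκ : A2 κ) (hτ : 0 < τ) : ContinuousOn (g2TV κ τ) (Ioi 0) :=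
  continuousOn_id.div (continuousOn_const.mul hκ.contDiffOn_comp_inv.continuousOn)
    fun _ hu => (mul_pos (mul_pos two_pos hτ) (hκ.pos_comp_inv hu)).ne'

end A2

section TravelingWaves

variable {V V' κ u w : ℝ → ℝ} {τ K c μ u1 u2 : ℝ}

theorem isBistable_g1TV_mul_fTV {V'' : ℝ → ℝ} {UM u0 : ℝ} (hV : A1 V V' V'' UM) (hκ : A2 κ)
    (hτ : 0 < τ) (hK : K ≠ 0) (hz : ZerosD1 V K c u1 u0 u2) :
    IsBistable (fun u => g1TV κ τ u * fTV V K c u)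
      (fun u => deriv (g1TV κ τ) u * fTV V K c u + g1TV κ τ u * fdTV V' K u) u1 u0 u2 := by
  obtain ⟨hf_pos, hf_neg, hf0_neg⟩ := hV.fTV_signs hK hz
  obtain ⟨hu1, h10, h02, hf1, hf0, hf2, -⟩ := hz
  have hu0 : 0 < u0 := hu1.trans h10
  have hpos : Icc u1 u2 ⊆ Ioi 0 := fun u hu => hu1.trans_le hu.1
  have hg1 := hκ.contDiffOn_g1TV hτ
  have hf : ∀ u, 0 < u → HasDerivAt (fTV V K c) (fdTV V' K u) u := fun u =>
    hV.hasDerivAt_fTV K c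
  exact
    { lt_mid := h10
      mid_lt := h02
      hasDerivAt := fun u hu => (((hg1.differentiableOn one_ne_zero).differentiableAt
        (Ioi_mem_nhds (hpos hu))).hasDerivAt).mul (hf u (hpos hu))
      continuousOn_deriv := (((hg1.continuousOn_deriv_of_isOpen isOpen_Ioi le_rfl).mul
        fun u hu => (hf u hu).continuousAt.continuousWithinAt).add
          (hg1.continuousOn.mul (hV.continuousOn_fdTV K))).mono hpos
      map_left := mul_eq_zero_of_right _ hf1
      map_mid := mul_eq_zero_of_right _ hf0
      map_right := mul_eq_zero_of_right _ hf2
      pos := fun u hu => mul_pos (hκ.g1TV_pos hτ (hu1.trans hu.1)) (hf_pos u hu)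
      neg := fun u hu => mul_neg_of_pos_of_neg (hκ.g1TV_pos hτ (hu0.trans hu.1)) (hf_neg u hu)
      deriv_mid_neg := by
        rw [hf0, mul_zero, zero_add]
        exact mul_neg_of_pos_of_neg (hκ.g1TV_pos hτ hu0) hf0_neg }

theorem isTVSol_iff_isTrajectory : IsTVSol V V' κ τ K c μ u w ↔
    IsTrajectory (fun u => g1TV κ τ u * fTV V K c u)
      (fun u => g2TV κ τ u * fdTV V' K u + μ * g2TV κ τ u) u w := by
  have hfield : ∀ u, g2TV κ τ u * hTV V' K μ u = g2TV κ τ u * fdTV V' K u + μ * g2TV κ τ u :=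
    fun u => by rw [hTV]; ring
  simp only [IsTVSol, hfield]
  exact ⟨fun h => ⟨h.1, h.2⟩, fun h => ⟨h.1, h.2⟩⟩

theorem hasHE1_iff_exists_isTrajectory (hu1 : 0 < u1) : HasHE1 V V' κ τ K c μ u1 u2 ↔
    ∃ u w, IsTrajectory (fun u => g1TV κ τ u * fTV V K c u)
      (fun u => g2TV κ τ u * fdTV V' K u + μ * g2TV κ τ u) u w ∧ HE1 u1 u2 u w := by
  simp only [HasHE1, isTVSol_iff_isTrajectory]
  exact ⟨fun ⟨u, w, hs, _, h⟩ => ⟨u, w, hs, h⟩,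
    fun ⟨u, w, hs, h⟩ => ⟨u, w, hs, fun z => hu1.trans (h.mem_Ioo hs z).1, h⟩⟩

theorem hasHE2_iff_exists_isTrajectory (hu1 : 0 < u1) : HasHE2 V V' κ τ K c μ u1 u2 ↔
    ∃ u w, IsTrajectory (fun u => g1TV κ τ u * fTV V K c u)
      (fun u => -(g2TV κ τ u * fdTV V' K u) + -μ * g2TV κ τ u) u w ∧ HE1 u1 u2 u w := by
  simp only [HasHE2, isTVSol_iff_isTrajectory, neg_mul, ← neg_add]
  constructor
  · rintro ⟨u, w, hs, -, h⟩
    exact ⟨_, _, hs.reverse, h.reverse⟩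
  · rintro ⟨u, w, hs, h⟩
    refine ⟨_, _, ?_, fun z => hu1.trans (h.mem_Ioo hs (-z)).1, h.reverse⟩
    simpa only [neg_neg] using hs.reverse

end TravelingWaves

end

theorem stmt0
    (V V' V'' κ : ℝ → ℝ) (τ UM K c K₁ : ℝ) (uMx umx : ℝ → ℝ)
    (hA1 : A1 V V' V'' UM) (hA2 : A2 κ) (hτ : 0 < τ) (hK : K ≠ 0)
    (huMx : UMaxHyp V' UM uMx) (humx : UMinHyp V' UM umx)
    (hK1 : K1Hyp V V' UM umx K₁)
    (hD1 : (K, c) ∈ D1 V V' UM uMx umx)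
    (u1 u0 u2 : ℝ) (hz : ZerosD1 V K c u1 u0 u2) :
    (∃ μb : ℝ, ∀ μ : ℝ, HasHE1 V V' κ τ K c μ u1 u2 ↔ μ = μb) ∧
    (∃ μf : ℝ, ∀ μ : ℝ, HasHE2 V V' κ τ K c μ u1 u2 ↔ μ = μf) := by
  have hu1 : 0 < u1 := hz.1
  have hpos : Icc u1 u2 ⊆ Ioi 0 := fun u hu => hu1.trans_le hu.1
  have hG := isBistable_g1TV_mul_fTV hA1 hA2 hτ hK hz
  have hg2 : ContinuousOn (g2TV κ τ) (Icc u1 u2) := (hA2.continuousOn_g2TV hτ).mono hpos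
  have hg2_pos : ∀ u ∈ Icc u1 u2, 0 < g2TV κ τ u := fun u hu => hA2.g2TV_pos hτ (hpos hu)
  have ha : ContinuousOn (fun u => g2TV κ τ u * fdTV V' K u) (Icc u1 u2) :=
    hg2.mul ((hA1.continuousOn_fdTV K).mono hpos)
  obtain ⟨μb, hμb⟩ := hG.exists_heteroclinic_iff ha hg2 hg2_pos
  obtain ⟨μf, hμf⟩ := hG.exists_heteroclinic_iff ha.neg hg2 hg2_pos
  exact ⟨⟨μb, fun μ => (hasHE1_iff_exists_isTrajectory hu1).trans (hμb μ)⟩,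
    ⟨-μf, fun μ => (hasHE2_iff_exists_isTrajectory hu1).trans
      ((hμf (-μ)).trans neg_eq_iff_eq_neg)⟩⟩

end TrafficTW
end
end

section
/- If (K,c) ∉ D₁ ∪ D₂ (with K ≠ 0), then for every μ ∈ ℝ and every ū > 0 with f(ū) = 0, the system (TV) has no solution (u,w) with u(z) > 0 for all z ∈ ℝ satisfying condition (HO) with level ū. -/
open Set Filter MeasureTheory

noncomputable section

namespace TrafficTW

section Homoclinic

open Topology Asymptotics

/-!
Write (TV) as `u' = w`, `w' = a(u) + b(u) w` with `a = g₁ f` and `b = g₂ h`. Outside `D₁ ∪ D₂` the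
function `f` never passes from positive to negative values as `u > 0` increases, so near the level
`ū` of a homoclinic orbit one of three things happens. If `a ≥ 0` above `ū` and `a ≤ 0` below it,
then the orbit can attain neither a maximum above `ū` nor a minimum below it, so it is constant.
Otherwise `a` has one sign on a neighbourhood of `ū` (a degenerate equilibrium), say `a ≤ 0`; then
`a ≤ 0` on all of `(0, ū)`, which forces `u ≥ ū`. Since `V'` is unimodal, `b` has a constant sign
to the right of `ū`. If `b ≤ 0` there, `w` cannot become positive after leaving the equilibrium, so
`u` decreases from its limit `ū` and is constant near `-∞`; if `b ≥ 0`, reverse time. A constant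
stretch is impossible because, by Grönwall's inequality, no orbit reaches an equilibrium in finite
time.
-/

/-! ### Calculus on the line -/

theorem deriv_deriv_nonpos_of_isLocalMax {f : ℝ → ℝ} {x : ℝ} (hf : ContinuousAt f x)
    (hmax : IsLocalMax f x) : deriv (deriv f) x ≤ 0 := by
  by_contra! hpos
  have hmin : IsLocalMin f x := isLocalMin_of_deriv_deriv_pos hpos hmax.deriv_eq_zero hf
  have hconst : f =ᶠ[𝓝 x] fun _ => f x := hmax.and hmin |>.mono fun _ h => le_antisymm h.1 h.2
  have hzero : deriv (deriv f) x = 0 := by simp [hconst.deriv.deriv_eq]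
  exact hpos.ne' hzero

theorem exists_forall_le_of_tendsto_of_lt {f : ℝ → ℝ} {l x₀ : ℝ} (hf : Continuous f)
    (hbot : Tendsto f atBot (𝓝 l)) (htop : Tendsto f atTop (𝓝 l)) (hx₀ : l < f x₀) :
    ∃ x, ∀ y, f y ≤ f x := by
  refine hf.exists_forall_ge' x₀ ?_
  rw [cocompact_eq_atBot_atTop, eventually_sup]
  exact ⟨(hbot.eventually_lt_const hx₀).mono fun _ => le_of_lt,
    (htop.eventually_lt_const hx₀).mono fun _ => le_of_lt⟩

theorem nonpos_of_tendsto_atBot_of_deriv_nonpos {f f' : ℝ → ℝ} {t : ℝ}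
    (hf : ∀ x ≤ t, HasDerivAt f (f' x) x) (hlim : Tendsto f atBot (𝓝 0))
    (hf' : ∀ x ≤ t, 0 < f x → f' x ≤ 0) {x : ℝ} (hx : x ≤ t) : f x ≤ 0 := by
  by_contra! hpos
  obtain ⟨y, hy, hyx⟩ :=
    ((hlim.eventually_lt_const (half_pos hpos)).and (eventually_lt_atBot x)).exists
  have hxy : 0 < x - y := sub_pos.2 hyx
  -- A line of small positive slope, from `f x / 2` at `y` to `3 f x / 4` at `x`, fences `f` in.
  set δ : ℝ := f x / (4 * (x - y)) with hδ
  have hδ_pos : 0 < δ := div_pos hpos (mul_pos four_pos hxy)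
  have hfence : f x ≤ f x / 2 + δ * (x - y) := by
    refine image_le_of_deriv_right_lt_deriv_boundary (a := y) (b := x) (f' := f')
      (B := fun s => f x / 2 + δ * (s - y)) (B' := fun _ => δ)
      (fun s hs => (hf s (hs.2.trans hx)).continuousAt.continuousWithinAt)
      (fun s hs => (hf s (hs.2.le.trans hx)).hasDerivWithinAt)
      (by simpa using hy.le)
      (fun s => by simpa using (((hasDerivAt_id s).sub_const y).const_mul δ).const_add (f x / 2))
      (fun s hs hfs => ?_) (right_mem_Icc.2 hyx.le)
    have hfs_pos : 0 < f s := by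
      have := mul_nonneg hδ_pos.le (sub_nonneg.2 hs.1)
      linarith
    exact (hf' s (hs.2.le.trans hx) hfs_pos).trans_lt hδ_pos
  have hend : δ * (x - y) = f x / 4 := by rw [hδ]; field_simp [hxy.ne']
  linarith

theorem eventually_nonpos_or_nonneg_of_isLocalExtrOn {f : ℝ → ℝ} {s : Set ℝ} {x : ℝ}
    (hf : ContinuousWithinAt f s x) (hx : IsLocalExtrOn f s x) :
    (∀ᶠ y in 𝓝[s] x, f y ≤ 0) ∨ (∀ᶠ y in 𝓝[s] x, 0 ≤ f y) := by
  rcases lt_trichotomy (f x) 0 with hneg | hzero | hpos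
  · exact .inl ((hf.eventually_lt_const hneg).mono fun _ => le_of_lt)
  · simpa only [IsLocalExtrOn, IsExtrFilter, IsMinFilter, IsMaxFilter, hzero] using hx.symm
  · exact .inr ((hf.eventually_const_lt hpos).mono fun _ => le_of_lt)

section Gronwall

variable {E : Type*} [NormedAddCommGroup E] [NormedSpace ℝ E] {x x' : ℝ → E} {t : ℝ}

theorem eventually_nhdsGE_eq_zero_of_deriv_isBigO (hx : ∀ s, HasDerivAt x (x' s) s)
    (hO : x' =O[𝓝 t] x) (ht : x t = 0) : ∀ᶠ s in 𝓝[≥] t, x s = 0 := by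
  obtain ⟨C, hC⟩ := hO.bound
  obtain ⟨r, hr, hbound⟩ := mem_nhdsGE_iff_exists_Ico_subset.1 (mem_nhdsWithin_of_mem_nhds hC)
  filter_upwards [Ico_mem_nhdsGE hr] with s hs
  exact eq_zero_of_abs_deriv_le_mul_abs_self_of_eq_zero_right
    (fun y _ => (hx y).continuousAt.continuousWithinAt) (fun y _ => (hx y).hasDerivWithinAt) ht
    (fun y hy => hbound ⟨hy.1, hy.2.trans hs.2⟩) s ⟨hs.1, le_rfl⟩

theorem eventually_eq_zero_of_deriv_isBigO (hx : ∀ s, HasDerivAt x (x' s) s)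
    (hO : x' =O[𝓝 t] x) (ht : x t = 0) : ∀ᶠ s in 𝓝 t, x s = 0 := by
  have hright := eventually_nhdsGE_eq_zero_of_deriv_isBigO hx hO ht
  have hneg : Tendsto (fun s : ℝ => -s) (𝓝 (-t)) (𝓝 t) := by
    simpa using (continuous_neg (G := ℝ)).tendsto (-t)
  have hleft : ∀ᶠ s in 𝓝[≥] (-t), x (-s) = 0 :=
    eventually_nhdsGE_eq_zero_of_deriv_isBigO (x' := fun s => -x' (-s))
      (fun s => by simpa [Function.comp_def] using (hx (-s)).scomp s (hasDerivAt_neg s))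
      (hO.comp_tendsto hneg).neg_left (by simpa using ht)
  rw [← nhdsLE_sup_nhdsGE, eventually_sup]
  refine ⟨?_, hright⟩
  simpa using tendsto_neg_nhdsLE.eventually hleft

theorem eq_zero_of_deriv_isBigO (hx : ∀ s, HasDerivAt x (x' s) s)
    (hO : ∀ s, x s = 0 → x' =O[𝓝 s] x) (ht : x t = 0) (s : ℝ) : x s = 0 := by
  have hclopen : IsClopen {s | x s = 0} :=
    ⟨isClosed_eq (continuous_iff_continuousAt.2 fun s => (hx s).continuousAt) continuous_const,
      isOpen_iff_mem_nhds.2 fun s hs => eventually_eq_zero_of_deriv_isBigO hx (hO s hs) hs⟩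
  exact (hclopen.eq_univ ⟨t, ht⟩ ▸ mem_univ s : s ∈ {s | x s = 0})

end Gronwall

/-! ### Homoclinic orbits of `u' = w`, `w' = a(u) + b(u) w` -/

theorem eq_of_eq_equilibrium {a b u w : ℝ → ℝ} {q z₀ : ℝ} (hu : ∀ z, HasDerivAt u (w z) z)
    (hw : ∀ z, HasDerivAt w (a (u z) + b (u z) * w z) z) (ha : a =O[𝓝 q] (· - q))
    (hb : b =O[𝓝 q] (1 : ℝ → ℝ)) (hu₀ : u z₀ = q) (hw₀ : w z₀ = 0) (z : ℝ) :
    u z = q ∧ w z = 0 := by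
  have hzero : (u z - q, w z) = 0 := by
    refine eq_zero_of_deriv_isBigO (x := fun z => (u z - q, w z))
      (fun s => ((hu s).sub_const q).prodMk (hw s)) (fun s hs => ?_) (t := z₀)
      (by simp [hu₀, hw₀]) z
    obtain ⟨hus, -⟩ := Prod.mk_eq_zero.1 hs
    have hlim : Tendsto u (𝓝 s) (𝓝 q) := by
      simpa only [sub_eq_zero.1 hus] using (hu s).continuousAt.tendsto
    have hau : (fun z => a (u z)) =O[𝓝 s] fun z => u z - q := ha.comp_tendsto hlim
    have hbw : (fun z => b (u z) * w z) =O[𝓝 s] w := by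
      simpa using (hb.comp_tendsto hlim).mul (isBigO_refl w (𝓝 s))
    exact isBigO_snd_prod.prod_left
      ((hau.trans isBigO_fst_prod).add (hbw.trans isBigO_snd_prod))
  simpa [sub_eq_zero] using hzero

/-- A solution of the planar system `u' = w`, `w' = a(u) + b(u) w` that tends to `(p, 0)` at both
ends and never meets an equilibrium `(q, 0)`, `a q = 0`. -/
structure IsHomoclinicOrbit (a b : ℝ → ℝ) (p : ℝ) (u w : ℝ → ℝ) : Prop where
  hasDerivAt_fst : ∀ z, HasDerivAt u (w z) z
  hasDerivAt_snd : ∀ z, HasDerivAt w (a (u z) + b (u z) * w z) z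
  tendsto_fst_atBot : Tendsto u atBot (𝓝 p)
  tendsto_fst_atTop : Tendsto u atTop (𝓝 p)
  tendsto_snd_atBot : Tendsto w atBot (𝓝 0)
  tendsto_snd_atTop : Tendsto w atTop (𝓝 0)
  ne_equilibrium : ∀ z, w z = 0 → a (u z) ≠ 0

theorem HO.isHomoclinicOrbit {a b u w : ℝ → ℝ} {p : ℝ} (h : HO p u w)
    (hu : ∀ z, HasDerivAt u (w z) z) (hw : ∀ z, HasDerivAt w (a (u z) + b (u z) * w z) z)
    (ha : ∀ z, a (u z) = 0 → a =O[𝓝 (u z)] (· - u z))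
    (hb : ∀ z, b =O[𝓝 (u z)] (1 : ℝ → ℝ)) : IsHomoclinicOrbit a b p u w := by
  obtain ⟨hubot, hutop, hwbot, hwtop, hne⟩ := h
  refine ⟨hu, hw, hubot, hutop, hwbot, hwtop, fun z hwz haz => hne ?_⟩
  have hconst := eq_of_eq_equilibrium hu hw (ha z haz) (hb z) rfl hwz
  have hlevel : u z = p :=
    tendsto_nhds_unique (tendsto_const_nhds.congr fun y => (hconst y).1.symm) hubot
  exact hlevel ▸ hconst

namespace IsHomoclinicOrbit

variable {a b u w : ℝ → ℝ} {p : ℝ}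

theorem continuous_fst (h : IsHomoclinicOrbit a b p u w) : Continuous u :=
  continuous_iff_continuousAt.2 fun z => (h.hasDerivAt_fst z).continuousAt

theorem reflect (h : IsHomoclinicOrbit a b p u w) :
    IsHomoclinicOrbit (fun x => -a (-x)) (fun x => b (-x)) (-p) (fun z => -u z)
      (fun z => -w z) where
  hasDerivAt_fst z := (h.hasDerivAt_fst z).fun_neg
  hasDerivAt_snd z := (h.hasDerivAt_snd z).fun_neg.congr_deriv (by simp only [neg_neg]; ring)
  tendsto_fst_atBot := h.tendsto_fst_atBot.neg
  tendsto_fst_atTop := h.tendsto_fst_atTop.neg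
  tendsto_snd_atBot := by simpa using h.tendsto_snd_atBot.neg
  tendsto_snd_atTop := by simpa using h.tendsto_snd_atTop.neg
  ne_equilibrium z hz := by simpa using h.ne_equilibrium z (neg_eq_zero.1 hz)

theorem reverse (h : IsHomoclinicOrbit a b p u w) :
    IsHomoclinicOrbit a (fun x => -b x) p (fun z => u (-z)) (fun z => -w (-z)) where
  hasDerivAt_fst z := by
    simpa [Function.comp_def] using (h.hasDerivAt_fst (-z)).scomp z (hasDerivAt_neg z)
  hasDerivAt_snd z :=
    ((h.hasDerivAt_snd (-z)).scomp z (hasDerivAt_neg z)).fun_neg.congr_deriv (by simp)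
  tendsto_fst_atBot := h.tendsto_fst_atTop.comp tendsto_neg_atBot_atTop
  tendsto_fst_atTop := h.tendsto_fst_atBot.comp tendsto_neg_atTop_atBot
  tendsto_snd_atBot := by simpa using (h.tendsto_snd_atTop.comp tendsto_neg_atBot_atTop).neg
  tendsto_snd_atTop := by simpa using (h.tendsto_snd_atBot.comp tendsto_neg_atTop_atBot).neg
  ne_equilibrium z hz := h.ne_equilibrium (-z) (neg_eq_zero.1 hz)

theorem le_of_nonneg_above (h : IsHomoclinicOrbit a b p u w)
    (ha : ∀ z, p < u z → 0 ≤ a (u z)) (z : ℝ) : u z ≤ p := by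
  by_contra! hz
  obtain ⟨m, hm⟩ := exists_forall_le_of_tendsto_of_lt h.continuous_fst h.tendsto_fst_atBot
    h.tendsto_fst_atTop hz
  have hmax : IsLocalMax u m := .of_forall hm
  have hwm : w m = 0 := hmax.hasDerivAt_eq_zero (h.hasDerivAt_fst m)
  have hderiv : deriv u = w := funext fun z => (h.hasDerivAt_fst z).deriv
  have ham : a (u m) ≤ 0 := by
    simpa [hderiv, (h.hasDerivAt_snd m).deriv, hwm] using
      deriv_deriv_nonpos_of_isLocalMax h.continuous_fst.continuousAt hmax
  exact h.ne_equilibrium m hwm (ham.antisymm (ha m (hz.trans_le (hm z))))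

theorem ge_of_nonpos_below (h : IsHomoclinicOrbit a b p u w)
    (ha : ∀ z, u z < p → a (u z) ≤ 0) (z : ℝ) : p ≤ u z :=
  neg_le_neg_iff.1 <| h.reflect.le_of_nonneg_above
    (fun z hz => by simpa using ha z (neg_lt_neg_iff.1 hz)) z

theorem not_eventually_eq (h : IsHomoclinicOrbit a b p u w) (hp : a p = 0) (z : ℝ) :
    ¬ ∀ᶠ y in 𝓝 z, u y = p := by
  intro hconst
  have hwz : w z = 0 :=
    ((h.hasDerivAt_fst z).congr_of_eventuallyEq (EventuallyEq.symm hconst)).unique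
      (hasDerivAt_const z p)
  exact h.ne_equilibrium z hwz (hconst.self_of_nhds ▸ hp)

theorem not_forall_ge_of_damping_nonpos (h : IsHomoclinicOrbit a b p u w) (hp : a p = 0)
    (ha : ∀ᶠ x in 𝓝[≥] p, a x ≤ 0) (hb : ∀ᶠ x in 𝓝[≥] p, b x ≤ 0) : ¬ ∀ z, p ≤ u z := by
  intro hge
  have hlim : Tendsto u atBot (𝓝[≥] p) :=
    tendsto_nhdsWithin_iff.2 ⟨h.tendsto_fst_atBot, .of_forall hge⟩
  obtain ⟨t, ht⟩ := eventually_atBot.1 (hlim.eventually (ha.and hb))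
  have hw : ∀ z ≤ t, w z ≤ 0 := fun z =>
    nonpos_of_tendsto_atBot_of_deriv_nonpos (fun z _ => h.hasDerivAt_snd z) h.tendsto_snd_atBot
      fun z hz hwz => add_nonpos (ht z hz).1 (mul_nonpos_of_nonpos_of_nonneg (ht z hz).2 hwz.le)
  have hanti : AntitoneOn u (Iic t) :=
    antitoneOn_of_hasDerivWithinAt_nonpos (convex_Iic t) h.continuous_fst.continuousOn
      (fun z _ => (h.hasDerivAt_fst z).hasDerivWithinAt)
      (fun z hz => hw z (interior_subset (s := Iic t) hz))
  have hle : ∀ z ≤ t, u z ≤ p := fun z hz =>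
    ge_of_tendsto h.tendsto_fst_atBot <| (eventually_le_atBot z).mono fun y hy =>
      hanti (hy.trans hz) hz hy
  exact h.not_eventually_eq hp (t - 1) <|
    (eventually_lt_nhds (sub_one_lt t)).mono fun z hz => (hle z hz.le).antisymm (hge z)

theorem not_forall_ge (h : IsHomoclinicOrbit a b p u w) (hp : a p = 0)
    (ha : ∀ᶠ x in 𝓝[≥] p, a x ≤ 0)
    (hb : (∀ᶠ x in 𝓝[≥] p, b x ≤ 0) ∨ (∀ᶠ x in 𝓝[≥] p, 0 ≤ b x)) : ¬ ∀ z, p ≤ u z := by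
  rcases hb with hb | hb
  · exact h.not_forall_ge_of_damping_nonpos hp ha hb
  · intro hge
    exact h.reverse.not_forall_ge_of_damping_nonpos hp ha
      (hb.mono fun _ => neg_nonpos.2) fun z => hge (-z)

theorem not_forall_le (h : IsHomoclinicOrbit a b p u w) (hp : a p = 0)
    (ha : ∀ᶠ x in 𝓝[≤] p, 0 ≤ a x)
    (hb : (∀ᶠ x in 𝓝[≤] p, b x ≤ 0) ∨ (∀ᶠ x in 𝓝[≤] p, 0 ≤ b x)) : ¬ ∀ z, u z ≤ p := by
  intro hle
  have hneg : Tendsto (fun x : ℝ => -x) (𝓝[≥] (-p)) (𝓝[≤] p) := tendsto_neg_nhdsGE_neg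
  exact h.reflect.not_forall_ge (by simpa using hp)
    ((hneg.eventually ha).mono fun _ => neg_nonpos.2)
    (hb.imp hneg.eventually hneg.eventually) fun z => neg_le_neg (hle z)

end IsHomoclinicOrbit

/-- `f` never passes from a positive to a negative value as its argument increases in `s`. -/
def SignMonotoneOn (f : ℝ → ℝ) (s : Set ℝ) : Prop :=
  ∀ ⦃x⦄, x ∈ s → ∀ ⦃y⦄, y ∈ s → x < y → 0 < f x → 0 ≤ f y

theorem SignMonotoneOn.sign_pattern {f : ℝ → ℝ} {s : Set ℝ} {p : ℝ} (h : SignMonotoneOn f s)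
    (hs : s ∈ 𝓝 p) :
    ((∀ x ∈ s, x < p → f x ≤ 0) ∧ (∀ x ∈ s, p < x → 0 ≤ f x)) ∨
    ((∀ x ∈ s, x < p → f x ≤ 0) ∧ ∀ᶠ x in 𝓝 p, f x ≤ 0) ∨
    ((∀ x ∈ s, p < x → 0 ≤ f x) ∧ ∀ᶠ x in 𝓝 p, 0 ≤ f x) := by
  by_cases habove : ∀ x ∈ s, p < x → 0 ≤ f x
  · by_cases hbelow : ∀ x ∈ s, x < p → f x ≤ 0
    · exact .inl ⟨hbelow, habove⟩
    · push Not at hbelow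
      obtain ⟨x, hx, hxp, hfx⟩ := hbelow
      refine .inr (.inr ⟨habove, ?_⟩)
      filter_upwards [hs, eventually_gt_nhds hxp] with y hy hxy using h hx hy hxy hfx
  · push Not at habove
    obtain ⟨y, hy, hpy, hfy⟩ := habove
    have hbefore : ∀ x ∈ s, x < y → f x ≤ 0 := fun x hx hxy =>
      not_lt.1 fun hfx => hfy.not_ge (h hx hy hxy hfx)
    refine .inr (.inl ⟨fun x hx hxp => hbefore x hx (hxp.trans hpy), ?_⟩)
    filter_upwards [hs, eventually_lt_nhds hpy] with x hx hxy using hbefore x hx hxy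

theorem SignMonotoneOn.pos_mul {f g : ℝ → ℝ} {s : Set ℝ} (hf : SignMonotoneOn f s)
    (hg : ∀ x ∈ s, 0 < g x) : SignMonotoneOn (fun x => g x * f x) s :=
  fun x hx y hy hxy hpos =>
    mul_nonneg (hg y hy).le (hf hx hy hxy (pos_of_mul_pos_right hpos (hg x hx).le))

theorem SignMonotoneOn.not_isHomoclinicOrbit {a b u w : ℝ → ℝ} {p : ℝ} {s : Set ℝ}
    (ha : SignMonotoneOn a s) (hs : s ∈ 𝓝 p) (hp : a p = 0)
    (hbr : (∀ᶠ x in 𝓝[≥] p, b x ≤ 0) ∨ (∀ᶠ x in 𝓝[≥] p, 0 ≤ b x))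
    (hbl : (∀ᶠ x in 𝓝[≤] p, b x ≤ 0) ∨ (∀ᶠ x in 𝓝[≤] p, 0 ≤ b x)) (hu : ∀ z, u z ∈ s) :
    ¬ IsHomoclinicOrbit a b p u w := by
  intro h
  rcases ha.sign_pattern hs with ⟨hbelow, habove⟩ | ⟨hbelow, hnear⟩ | ⟨habove, hnear⟩
  · have hle := h.le_of_nonneg_above fun z => habove _ (hu z)
    have hge := h.ge_of_nonpos_below fun z => hbelow _ (hu z)
    exact h.not_eventually_eq hp 0 (.of_forall fun z => (hle z).antisymm (hge z))
  · exact h.not_forall_ge hp (hnear.filter_mono nhdsWithin_le_nhds) hbr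
      (h.ge_of_nonpos_below fun z => hbelow _ (hu z))
  · exact h.not_forall_le hp (hnear.filter_mono nhdsWithin_le_nhds) hbl
      (h.le_of_nonneg_above fun z => habove _ (hu z))

/-! ### Unimodal velocity functions -/

/-- The part of (A1) that excludes homoclinic orbits: `V` is `C¹` on `[0,∞)` with a derivative that
is positive on `(0,∞)`, increases (weakly) up to `UM` and decreases (weakly) afterwards. -/
structure IsUnimodalVelocity (V V' : ℝ → ℝ) (UM : ℝ) : Prop where
  hasDerivWithinAt : ∀ u ∈ Ici (0 : ℝ), HasDerivWithinAt V (V' u) (Ici 0) u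
  continuousOn_deriv : ContinuousOn V' (Ici 0)
  deriv_pos : ∀ u, 0 < u → 0 < V' u
  pos : 0 < UM
  monotoneOn_deriv : MonotoneOn V' (Icc 0 UM)
  antitoneOn_deriv : AntitoneOn V' (Ici UM)

theorem strictMonoOn_or_strictAntiOn_of_hasDerivAt_ne_zero {f f' : ℝ → ℝ} {s : Set ℝ}
    (hs : Convex ℝ s) (hc : ContinuousOn f s) (hf : ∀ x ∈ interior s, HasDerivAt f (f' x) x)
    (hne : ∀ x ∈ interior s, f' x ≠ 0) : StrictMonoOn f s ∨ StrictAntiOn f s := by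
  have hf' : ∀ x ∈ interior s, HasDerivWithinAt f (f' x) (interior s) x :=
    fun x hx => (hf x hx).hasDerivWithinAt
  rcases hasDerivWithinAt_forall_lt_or_forall_gt_of_forall_ne hs.interior hf' hne with h | h
  · exact .inr (strictAntiOn_of_hasDerivWithinAt_neg hs hc hf' h)
  · exact .inl (strictMonoOn_of_hasDerivWithinAt_pos hs hc hf' h)

theorem A1.isUnimodalVelocity {V V' V'' : ℝ → ℝ} {UM : ℝ} (h : A1 V V' V'' UM) :
    IsUnimodalVelocity V V' UM := by
  obtain ⟨hV, hc, hV', -, hpos, -, -, hUM, hmax, hzero⟩ := h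
  refine ⟨hV, hc, hpos, hUM, ?_, ?_⟩
  · rcases strictMonoOn_or_strictAntiOn_of_hasDerivAt_ne_zero (convex_Icc 0 UM)
      (hc.mono Icc_subset_Ici_self) (f' := V'') (fun x hx => hV' x (by simp_all))
      (fun x hx => by rw [interior_Icc] at hx; exact mt (hzero x hx.1).1 hx.2.ne) with hm | ha
    · exact hm.monotoneOn
    · have hlt : V' UM < V' (UM / 2) :=
        ha ⟨by linarith, by linarith⟩ ⟨hUM.le, le_rfl⟩ (half_lt_self hUM)
      exact absurd (hmax (UM / 2) (half_pos hUM)) hlt.not_ge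
  · rcases strictMonoOn_or_strictAntiOn_of_hasDerivAt_ne_zero (convex_Ici UM)
      (hc.mono (Ici_subset_Ici.2 hUM.le)) (f' := V'')
      (fun x hx => hV' x (hUM.trans (by simpa using hx)))
      (fun x hx => by
        rw [interior_Ici] at hx; exact mt (hzero x (hUM.trans hx)).1 (ne_of_gt hx)) with hm | ha
    · have hlt : V' UM < V' (UM + 1) :=
        hm self_mem_Ici (mem_Ici.2 (by linarith)) (lt_add_one UM)
      exact absurd (hmax (UM + 1) (by linarith)) hlt.not_ge
    · exact ha.antitoneOn

/-- The function `u ↦ K u - V(u)`, whose value at `0` and critical values are `c₀`, `c_M(K)` and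
`c_m(K)`. -/
def waveSpeed (V : ℝ → ℝ) (K u : ℝ) : ℝ := K * u - V u

theorem waveSpeed_zero (V : ℝ → ℝ) (K : ℝ) : waveSpeed V K 0 = c0v V := by
  simp [waveSpeed, c0v]

namespace IsUnimodalVelocity

variable {V V' : ℝ → ℝ} {UM K c : ℝ}

theorem deriv_le (h : IsUnimodalVelocity V V' UM) {u : ℝ} (hu : 0 ≤ u) : V' u ≤ V' UM := by
  rcases le_total u UM with hle | hge
  · exact h.monotoneOn_deriv ⟨hu, hle⟩ ⟨h.pos.le, le_rfl⟩ hle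
  · exact h.antitoneOn_deriv self_mem_Ici hge hge

theorem min_le_deriv (h : IsUnimodalVelocity V V' UM) {r s u : ℝ} (hr : 0 ≤ r)
    (hu : u ∈ Icc r s) : min (V' r) (V' s) ≤ V' u := by
  rcases le_total u UM with hle | hge
  · exact min_le_of_left_le
      (h.monotoneOn_deriv ⟨hr, hu.1.trans hle⟩ ⟨hr.trans hu.1, hle⟩ hu.1)
  · exact min_le_of_right_le (h.antitoneOn_deriv hge (hge.trans hu.2) hu.2)

theorem hasDerivAt (h : IsUnimodalVelocity V V' UM) {u : ℝ} (hu : 0 < u) :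
    HasDerivAt V (V' u) u :=
  (h.hasDerivWithinAt u hu.le).hasDerivAt (Ici_mem_nhds hu)

theorem hasDerivWithinAt_waveSpeed (h : IsUnimodalVelocity V V' UM) {u : ℝ} (hu : u ∈ Ici 0) :
    HasDerivWithinAt (waveSpeed V K) (K - V' u) (Ici 0) u := by
  simpa using! ((hasDerivWithinAt_id u (Ici 0)).const_mul K).sub (h.hasDerivWithinAt u hu)

theorem monotoneOn_waveSpeed (h : IsUnimodalVelocity V V' UM) {s : Set ℝ} (hs : Convex ℝ s)
    (hs₀ : s ⊆ Ici 0) (hK : ∀ u ∈ s, V' u ≤ K) : MonotoneOn (waveSpeed V K) s :=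
  monotoneOn_of_hasDerivWithinAt_nonneg hs
    (fun _ hu => (h.hasDerivWithinAt_waveSpeed (hs₀ hu)).continuousWithinAt.mono hs₀)
    (fun _ hu => (h.hasDerivWithinAt_waveSpeed (hs₀ (interior_subset hu))).mono
      (interior_subset.trans hs₀))
    (fun u hu => sub_nonneg.2 (hK u (interior_subset hu)))

theorem antitoneOn_waveSpeed (h : IsUnimodalVelocity V V' UM) {s : Set ℝ} (hs : Convex ℝ s)
    (hs₀ : s ⊆ Ici 0) (hK : ∀ u ∈ s, K ≤ V' u) : AntitoneOn (waveSpeed V K) s :=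
  antitoneOn_of_hasDerivWithinAt_nonpos hs
    (fun _ hu => (h.hasDerivWithinAt_waveSpeed (hs₀ hu)).continuousWithinAt.mono hs₀)
    (fun _ hu => (h.hasDerivWithinAt_waveSpeed (hs₀ (interior_subset hu))).mono
      (interior_subset.trans hs₀))
    (fun u hu => sub_nonpos.2 (hK u (interior_subset hu)))

theorem antitoneOn_waveSpeed_Icc (h : IsUnimodalVelocity V V' UM) {r s : ℝ} (hr₀ : 0 ≤ r)
    (hr : K ≤ V' r) (hs : K ≤ V' s) : AntitoneOn (waveSpeed V K) (Icc r s) :=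
  h.antitoneOn_waveSpeed (convex_Icc r s) (fun _ hu => hr₀.trans hu.1) fun _ hu =>
    (le_min hr hs).trans (h.min_le_deriv hr₀ hu)

theorem monotoneOn_waveSpeed_Icc (h : IsUnimodalVelocity V V' UM) {r : ℝ} (hr : r ≤ UM)
    (hK : V' r ≤ K) : MonotoneOn (waveSpeed V K) (Icc 0 r) :=
  h.monotoneOn_waveSpeed (convex_Icc 0 r) Icc_subset_Ici_self fun _ hu =>
    (h.monotoneOn_deriv ⟨hu.1, hu.2.trans hr⟩ ⟨hu.1.trans hu.2, hr⟩ hu.2).trans hK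

theorem monotoneOn_waveSpeed_Ici (h : IsUnimodalVelocity V V' UM) {r : ℝ} (hr : UM ≤ r)
    (hK : V' r ≤ K) : MonotoneOn (waveSpeed V K) (Ici r) :=
  h.monotoneOn_waveSpeed (convex_Ici r) (Ici_subset_Ici.2 (h.pos.le.trans hr)) fun _ hu =>
    (h.antitoneOn_deriv hr (hr.trans hu) hu).trans hK

theorem waveSpeed_min_le (h : IsUnimodalVelocity V V' UM) {m x y : ℝ} (hm : UM ≤ m)
    (hV'm : V' m = K) (hx : 0 < x) (hxy : x < y) (hdrop : waveSpeed V K y < waveSpeed V K x) :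
    x < m ∧ waveSpeed V K m ≤ waveSpeed V K y := by
  have hmono := h.monotoneOn_waveSpeed_Ici hm hV'm.le
  have hxm : x < m := not_le.1 fun hmx => hdrop.not_ge (hmono hmx (hmx.trans hxy.le) hxy.le)
  refine ⟨hxm, ?_⟩
  rcases le_total m y with hmy | hym
  · exact hmono self_mem_Ici hmy hmy
  have hV'y : K ≤ V' y := by
    by_contra! hlt
    have hyUM : y ≤ UM :=
      le_of_not_ge fun hUM => hlt.not_ge (hV'm ▸ h.antitoneOn_deriv hUM hm hym)
    exact hdrop.not_ge
      (h.monotoneOn_waveSpeed_Icc hyUM hlt.le ⟨hx.le, hxy.le⟩ ⟨(hx.trans hxy).le, le_rfl⟩ hxy.le)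
  exact h.antitoneOn_waveSpeed_Icc (hx.trans hxy).le hV'y hV'm.ge ⟨le_rfl, hym⟩ ⟨hym, le_rfl⟩ hym

theorem waveSpeed_le_max (h : IsUnimodalVelocity V V' UM) {M m x : ℝ} (hM : M ∈ Icc 0 UM)
    (hV'M : V' M = K) (hV'm : V' m = K) (hx : 0 ≤ x) (hxm : x ≤ m) :
    waveSpeed V K x ≤ waveSpeed V K M := by
  rcases le_total x M with hxM | hMx
  · exact h.monotoneOn_waveSpeed_Icc hM.2 hV'M.le ⟨hx, hxM⟩ ⟨hM.1, le_rfl⟩ hxM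
  · exact h.antitoneOn_waveSpeed_Icc hM.1 hV'M.ge hV'm.ge ⟨le_rfl, hMx.trans hxm⟩ ⟨hMx, hxm⟩ hMx

theorem mem_D1_union_D2 (h : IsUnimodalVelocity V V' UM) {K₁ : ℝ} {uMx umx : ℝ → ℝ}
    (huMx : UMaxHyp V' UM uMx) (humx : UMinHyp V' UM umx) (hK₁ : K1Hyp V V' UM umx K₁)
    (hK : 0 < K) {x y : ℝ} (hx : 0 < x) (hxy : x < y) (hcx : c < waveSpeed V K x)
    (hyc : waveSpeed V K y < c) : (K, c) ∈ D1 V V' UM uMx umx ∪ D2 V V' umx K₁ := by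
  have hdrop := hyc.trans hcx
  have hKM : K < V' UM := by
    by_contra! hle
    have hmono := h.monotoneOn_waveSpeed (convex_Ici 0) subset_rfl
      fun u hu => (h.deriv_le hu).trans hle
    exact hdrop.not_ge (hmono hx.le (hx.trans hxy).le hxy.le)
  obtain ⟨hUMm, hV'm⟩ := humx K hK hKM
  obtain ⟨hxm, hmy⟩ := h.waveSpeed_min_le hUMm.le hV'm hx hxy hdrop
  have hcm : cmf V umx K < c := hmy.trans_lt hyc
  have hKK₁ : c ≤ c0v V → K < K₁ := fun hc => by
    obtain ⟨-, -, -, hcm₁, hcm_gt⟩ := hK₁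
    by_contra! hle
    rcases hle.eq_or_lt with rfl | hlt
    · exact (hcm.trans_le hc).ne hcm₁
    · exact (hcm.trans_le hc).not_gt (hcm_gt K hlt hKM)
  rcases lt_or_ge c (c0v V) with hc | hc
  · exact .inr (.inr ⟨hK, hKK₁ hc.le, hcm, hc⟩)
  have hK₀ : V' 0 < K := by
    by_contra! hle
    have hanti := h.antitoneOn_waveSpeed_Icc le_rfl hle hV'm.ge
    have hx₀ := hanti ⟨le_rfl, (hx.trans hxm).le⟩ ⟨hx.le, hxm.le⟩ hx.le
    rw [waveSpeed_zero] at hx₀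
    exact hcx.not_ge (hx₀.trans hc)
  obtain ⟨hM, hV'M⟩ := huMx K hK₀ hKM
  rcases hc.eq_or_lt with hc | hc
  · exact .inr (.inl ⟨hK₀, hKK₁ hc.ge, hc.symm⟩)
  · exact .inl ⟨hK₀, hKM, max_lt hc hcm,
      hcx.trans_le (h.waveSpeed_le_max (Ioo_subset_Icc_self hM) hV'M hV'm hx.le hxm.le)⟩

/-! ### The traveling-wave system -/

theorem signMonotoneOn_fTV (h : IsUnimodalVelocity V V' UM) {K₁ : ℝ} {uMx umx : ℝ → ℝ}
    (huMx : UMaxHyp V' UM uMx) (humx : UMinHyp V' UM umx) (hK₁ : K1Hyp V V' UM umx K₁)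
    (hK : K ≠ 0) (hD : (K, c) ∉ D1 V V' UM uMx umx ∪ D2 V V' umx K₁) :
    SignMonotoneOn (fTV V K c) (Ioi 0) := by
  have hf : ∀ u, fTV V K c u = (waveSpeed V K u - c) / K := fun _ => rfl
  intro x hx y hy hxy hpos
  rw [hf] at hpos ⊢
  rcases hK.lt_or_gt with hneg | hKpos
  · have hanti : waveSpeed V K y ≤ waveSpeed V K x :=
      h.antitoneOn_waveSpeed (convex_Ioi 0) Ioi_subset_Ici_self
        (fun u hu => hneg.le.trans (h.deriv_pos u hu).le) hx hy hxy.le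
    exact hpos.le.trans (div_le_div_of_nonpos_of_le hneg.le (sub_le_sub_right hanti c))
  · by_contra! hlt
    exact hD <| h.mem_D1_union_D2 huMx humx hK₁ hKpos hx hxy
      (sub_pos.1 ((div_pos_iff_of_pos_right hKpos).1 hpos))
      (sub_neg.1 (neg_of_div_neg_left hlt hKpos.le))

theorem continuousAt_deriv (h : IsUnimodalVelocity V V' UM) {p : ℝ} (hp : 0 < p) :
    ContinuousAt V' p :=
  h.continuousOn_deriv.continuousAt (Ici_mem_nhds hp)

theorem isLocalExtrOn_deriv_Ici (h : IsUnimodalVelocity V V' UM) {p : ℝ} (hp : 0 < p) :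
    IsLocalExtrOn V' (Ici p) p := by
  rcases lt_or_ge p UM with hlt | hge
  · refine .inl ?_
    filter_upwards [Ico_mem_nhdsGE hlt] with x hx
    exact h.monotoneOn_deriv ⟨hp.le, hlt.le⟩ ⟨hp.le.trans hx.1, hx.2.le⟩ hx.1
  · refine .inr ?_
    filter_upwards [self_mem_nhdsWithin] with x hx
    exact h.antitoneOn_deriv hge (hge.trans hx) hx

theorem isLocalExtrOn_deriv_Iic (h : IsUnimodalVelocity V V' UM) {p : ℝ} (hp : 0 < p) :
    IsLocalExtrOn V' (Iic p) p := by
  rcases le_or_gt p UM with hle | hgt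
  · refine .inr ?_
    filter_upwards [Ioc_mem_nhdsLE hp] with x hx
    exact h.monotoneOn_deriv ⟨hx.1.le, hx.2.trans hle⟩ ⟨hp.le, hle⟩ hx.2
  · refine .inl ?_
    filter_upwards [Ioc_mem_nhdsLE hgt] with x hx
    exact h.antitoneOn_deriv hx.1.le hgt.le hx.2

theorem hasDerivAt_fTV (h : IsUnimodalVelocity V V' UM) {u : ℝ} (hu : 0 < u) :
    HasDerivAt (fTV V K c) (fdTV V' K u) u := by
  simpa using! ((((hasDerivAt_id u).const_mul K).sub (h.hasDerivAt hu)).sub_const c).div_const K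

end IsUnimodalVelocity

theorem continuousAt_hTV {V' : ℝ → ℝ} {K μ p : ℝ} (hV' : ContinuousAt V' p) :
    ContinuousAt (hTV V' K μ) p := by
  unfold hTV fdTV
  fun_prop

theorem isLocalExtrOn_hTV {V' : ℝ → ℝ} {K μ p : ℝ} {s : Set ℝ} (h : IsLocalExtrOn V' s p) :
    IsLocalExtrOn (hTV V' K μ) s p := by
  rcases le_total K 0 with hK | hK
  · exact IsExtrFilter.comp_mono h (g := fun t => (K - t) / K + μ) fun s t hst =>
      add_le_add_left (div_le_div_of_nonpos_of_le hK (sub_le_sub_left hst K)) μ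
  · exact IsExtrFilter.comp_antitone h (g := fun t => (K - t) / K + μ) fun s t hst =>
      add_le_add_left (div_le_div_of_nonneg_right (sub_le_sub_left hst K) hK) μ

section Coefficients

variable {κ : ℝ → ℝ} {τ u : ℝ}

theorem g1TV_pos (hκ : ∀ ρ, 0 < ρ → 0 < κ ρ) (hτ : 0 < τ) (hu : 0 < u) : 0 < g1TV κ τ u := by
  have := hκ (1 / u) (by positivity)
  unfold g1TV
  positivity

theorem g2TV_eq (κ : ℝ → ℝ) (τ u : ℝ) : g2TV κ τ u = u / 2 * g1TV κ τ u := by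
  unfold g1TV g2TV
  rw [mul_assoc, div_mul_div_comm, mul_one]

theorem g2TV_pos (hκ : ∀ ρ, 0 < ρ → 0 < κ ρ) (hτ : 0 < τ) (hu : 0 < u) : 0 < g2TV κ τ u :=
  g2TV_eq κ τ u ▸ mul_pos (half_pos hu) (g1TV_pos hκ hτ hu)

theorem continuousAt_g1TV (hκc : ContinuousOn κ (Ioi 0)) (hκ : ∀ ρ, 0 < ρ → 0 < κ ρ) (hτ : τ ≠ 0)
    (hu : 0 < u) : ContinuousAt (g1TV κ τ) u := by
  have hinv : 0 < 1 / u := one_div_pos.2 hu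
  have hκu : ContinuousAt (fun x => κ (1 / x)) u :=
    (hκc.continuousAt (Ioi_mem_nhds hinv)).comp' (continuousAt_const.div continuousAt_id hu.ne')
  exact continuousAt_const.div (continuousAt_const.mul hκu) (mul_ne_zero hτ (hκ _ hinv).ne')

theorem continuousAt_g2TV (hκc : ContinuousOn κ (Ioi 0)) (hκ : ∀ ρ, 0 < ρ → 0 < κ ρ) (hτ : τ ≠ 0)
    (hu : 0 < u) : ContinuousAt (g2TV κ τ) u := by
  rw [funext (g2TV_eq κ τ)]
  exact (continuousAt_id.div_const 2).mul (continuousAt_g1TV hκc hκ hτ hu)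

end Coefficients

section TV

variable {V V' κ u w : ℝ → ℝ} {τ UM K c μ p : ℝ} {s : Set ℝ}

theorem HO.isHomoclinicOrbit_of_isTVSol (hV : IsUnimodalVelocity V V' UM)
    (hκc : ContinuousOn κ (Ioi 0)) (hκ : ∀ ρ, 0 < ρ → 0 < κ ρ) (hτ : 0 < τ) (h : HO p u w)
    (hsol : IsTVSol V V' κ τ K c μ u w) (hu : ∀ z, 0 < u z) :
    IsHomoclinicOrbit (fun x => g1TV κ τ x * fTV V K c x) (fun x => g2TV κ τ x * hTV V' K μ x)
      p u w := by
  refine h.isHomoclinicOrbit hsol.1 hsol.2 (fun z hz => ?_) (fun z => ?_)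
  · have hfz : fTV V K c (u z) = 0 := (mul_eq_zero_iff_left (g1TV_pos hκ hτ (hu z)).ne').1 hz
    have hf : fTV V K c =O[𝓝 (u z)] (· - u z) := by
      simpa [hfz] using (hV.hasDerivAt_fTV (K := K) (c := c) (hu z)).isBigO_sub
    simpa using ((continuousAt_g1TV hκc hκ hτ.ne' (hu z)).tendsto.isBigO_one ℝ).mul hf
  · exact ((continuousAt_g2TV hκc hκ hτ.ne' (hu z)).mul
      (continuousAt_hTV (hV.continuousAt_deriv (hu z)))).tendsto.isBigO_one ℝ

theorem eventually_g2TV_mul_hTV_nonpos_or_nonneg (hκ : ∀ ρ, 0 < ρ → 0 < κ ρ) (hτ : 0 < τ)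
    (hp : 0 < p) (hc : ContinuousAt V' p) (hs : IsLocalExtrOn V' s p) :
    (∀ᶠ x in 𝓝[s] p, g2TV κ τ x * hTV V' K μ x ≤ 0) ∨
    (∀ᶠ x in 𝓝[s] p, 0 ≤ g2TV κ τ x * hTV V' K μ x) := by
  have hg2 : ∀ᶠ x in 𝓝[s] p, 0 ≤ g2TV κ τ x :=
    eventually_nhdsWithin_of_eventually_nhds <|
      (eventually_gt_nhds hp).mono fun _ hx => (g2TV_pos hκ hτ hx).le
  exact (eventually_nonpos_or_nonneg_of_isLocalExtrOn (continuousAt_hTV hc).continuousWithinAt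
    (isLocalExtrOn_hTV hs)).imp
      (fun h => (hg2.and h).mono fun _ hx => mul_nonpos_of_nonneg_of_nonpos hx.1 hx.2)
      (fun h => (hg2.and h).mono fun _ hx => mul_nonneg hx.1 hx.2)

end TV

end Homoclinic

theorem stmt1_general
    (V V' κ : ℝ → ℝ) (τ UM K c K₁ : ℝ) (uMx umx : ℝ → ℝ)
    (hV : IsUnimodalVelocity V V' UM) (hκc : ContinuousOn κ (Ioi 0))
    (hκ : ∀ ρ, 0 < ρ → 0 < κ ρ) (hτ : 0 < τ) (hK : K ≠ 0)
    (huMx : UMaxHyp V' UM uMx) (humx : UMinHyp V' UM umx)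
    (hK1 : K1Hyp V V' UM umx K₁)
    (hD : (K, c) ∉ D1 V V' UM uMx umx ∪ D2 V V' umx K₁) :
    ∀ μ ub : ℝ, 0 < ub → fTV V K c ub = 0 → ¬ HasHO V V' κ τ K c μ ub := by
  rintro μ ub hub hf ⟨u, w, hsol, hu, hHO⟩
  have hsign : SignMonotoneOn (fun x => g1TV κ τ x * fTV V K c x) (Ioi 0) :=
    (hV.signMonotoneOn_fTV huMx humx hK1 hK hD).pos_mul fun _ => g1TV_pos hκ hτ
  have hV' := hV.continuousAt_deriv hub
  exact hsign.not_isHomoclinicOrbit (Ioi_mem_nhds hub) (by simp [hf])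
    (eventually_g2TV_mul_hTV_nonpos_or_nonneg hκ hτ hub hV' (hV.isLocalExtrOn_deriv_Ici hub))
    (eventually_g2TV_mul_hTV_nonpos_or_nonneg hκ hτ hub hV' (hV.isLocalExtrOn_deriv_Iic hub))
    hu (hHO.isHomoclinicOrbit_of_isTVSol hV hκc hκ hτ hsol hu)

theorem stmt1
    (V V' V'' κ : ℝ → ℝ) (τ UM K c K₁ : ℝ) (uMx umx : ℝ → ℝ)
    (hA1 : A1 V V' V'' UM) (hA2 : A2 κ) (hτ : 0 < τ) (hK : K ≠ 0)
    (huMx : UMaxHyp V' UM uMx) (humx : UMinHyp V' UM umx)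
    (hK1 : K1Hyp V V' UM umx K₁)
    (hD : (K, c) ∉ D1 V V' UM uMx umx ∪ D2 V V' umx K₁) :
    ∀ μ ub : ℝ, 0 < ub → fTV V K c ub = 0 → ¬ HasHO V V' κ τ K c μ ub := by
  exact stmt1_general V V' κ τ UM K c K₁ uMx umx hA1.isUnimodalVelocity hA2.1.continuousOn hA2.2
    hτ hK huMx humx hK1 hD

end TrafficTW
end
end
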